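/- Let C > 0 be a constant and let X be an ℝ^d random vector with a log-concave Lebesgue density, E[X] = 0, and all eigenvalues of Cov(X) in [C^{-1}, C]. Then there exists a constant L > 0, depending only on C, such that for any unit vectors u, v ∈ ℝ^d: L^{-1}·‖u − v‖² ≤ E[|u'X|·1(sgn(u'X) ≠ sgn(v'X))] ≤ L·‖u − v‖². Moreover, the upper bound continues to hold if the assumption E[X] = 0 is replaced by ‖E[X]‖ ≤ C. -/

import Mathlib

open MeasureTheory Matrix

noncomputable section

/-- The Euclidean norm of a vector in `Fin d → ℝ`. -/
def eNorm {d : ℕ} (x : Fin d → ℝ) : ℝ := Real.sqrt (∑ i, x i ^ 2)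

/-- A nonnegative function `p` on `ℝ^d` is log-concave. -/
def IsLogConcaveFn {d : ℕ} (p : (Fin d → ℝ) → ℝ) : Prop :=
  ∀ x y : Fin d → ℝ, ∀ t : ℝ, 0 ≤ t → t ≤ 1 →
    p x ^ t * p y ^ (1 - t) ≤ p (t • x + (1 - t) • y)

/-!
For unit vectors `u`, `v` the loss depends only on the law of `(⟪u, X⟫, ⟪e, X⟫)`, where `e ⟂ u` is
a unit vector with `v = ⟪u, v⟫ u + σ e`, and `|σ|` is comparable to `‖u - v‖` when the angle between
`u` and `v` is acute. If the planar density at `(a, b)` is bounded below near the origin and above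
by a multiple of `(1 + a² + b²)⁻²`, then integrating the loss over the wedge `|a| ≲ |σ b|`, where
the signs disagree, gives order `σ²`.

These density bounds depend on `C` alone. By Prékopa–Leindler the planar marginal is log-concave and
its one-dimensional marginals have Borell tails, so third moments are bounded and, by
Cauchy–Schwarz, `E|⟪a, X⟫|` is bounded below for unit `a`. When `X` is centred, every half-plane at
a fixed small distance from the origin then carries a definite mass, which forces the density to be
bounded below on a ball around the origin; log-concavity and the second moments turn this into the
upper bound.
-/

section PrekopaLeindler

open Set
open scoped ENNReal Pointwise

theorem volume_add_volume_le_volume_add_of_isCompact {K J : Set ℝ} (hK : IsCompact K)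
    (hJ : IsCompact J) (hK₀ : K.Nonempty) (hJ₀ : J.Nonempty) :
    volume K + volume J ≤ volume (K + J) := by
  -- The translates of `K` by `min J` and of `J` by `max K` lie in `K + J` and share one point.
  have hmax := hK.sSup_mem hK₀
  have hmin := hJ.sInf_mem hJ₀
  have hinter : (sInf J +ᵥ K) ∩ (sSup K +ᵥ J) ⊆ {sInf J + sSup K} := by
    rintro _ ⟨⟨x, hx, rfl⟩, ⟨y, hy, hxy⟩⟩
    have hx' : x ≤ sSup K := le_csSup hK.bddAbove hx
    have hy' : sInf J ≤ y := csInf_le hJ.bddBelow hy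
    simp only [vadd_eq_add, mem_singleton_iff] at hxy ⊢
    linarith
  have hdisj : AEDisjoint volume (sInf J +ᵥ K) (sSup K +ᵥ J) :=
    measure_mono_null hinter (measure_singleton _)
  have hmeas : NullMeasurableSet (sSup K +ᵥ J) :=
    (hJ.vadd (sSup K)).isClosed.measurableSet.nullMeasurableSet
  calc volume K + volume J = volume (sInf J +ᵥ K) + volume (sSup K +ᵥ J) := by
        rw [measure_vadd, measure_vadd]
    _ = volume ((sInf J +ᵥ K) ∪ (sSup K +ᵥ J)) := (measure_union₀ hmeas hdisj).symm
    _ ≤ volume (K + J) := measure_mono (union_subset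
        (by rintro _ ⟨x, hx, rfl⟩; exact ⟨x, hx, sInf J, hmin, add_comm _ _⟩)
        (by rintro _ ⟨y, hy, rfl⟩; exact ⟨sSup K, hmax, y, hy, rfl⟩))

theorem volume_add_volume_le_volume_add {A B : Set ℝ} (hA : MeasurableSet A)
    (hB : MeasurableSet B) (hA₀ : A.Nonempty) (hB₀ : B.Nonempty) :
    volume A + volume B ≤ volume (A + B) := by
  obtain ⟨a, ha⟩ := hA₀
  obtain ⟨b, hb⟩ := hB₀
  have hcompact : ∀ K J : Set ℝ, K ⊆ A ∧ IsCompact K → J ⊆ B ∧ IsCompact J →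
      volume K + volume J ≤ volume (A + B) := fun K J hK hJ =>
    calc volume K + volume J ≤ volume (insert a K) + volume (insert b J) :=
          add_le_add (measure_mono (subset_insert a K)) (measure_mono (subset_insert b J))
      _ ≤ volume (insert a K + insert b J) :=
          volume_add_volume_le_volume_add_of_isCompact (hK.2.insert a) (hJ.2.insert b)
            (insert_nonempty a K) (insert_nonempty b J)
      _ ≤ volume (A + B) :=
          measure_mono (add_subset_add (insert_subset ha hK.1) (insert_subset hb hJ.1))
  simpa only [hA.measure_eq_iSup_isCompact, hB.measure_eq_iSup_isCompact, iSup_and'] using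
    ENNReal.biSup_add_biSup_le' ⟨∅, empty_subset A, isCompact_empty⟩
      ⟨∅, empty_subset B, isCompact_empty⟩ (fun K hK J hJ => hcompact K J hK hJ)

theorem ofReal_mul_volume_add_le_volume_smul_add_smul {A B : Set ℝ} (hA : MeasurableSet A)
    (hB : MeasurableSet B) (hA₀ : A.Nonempty) (hB₀ : B.Nonempty) {s t : ℝ} (hs : 0 < s)
    (ht : 0 < t) :
    ENNReal.ofReal s * volume A + ENNReal.ofReal t * volume B ≤ volume (s • A + t • B) := by
  have hscale : ∀ {r : ℝ}, 0 < r → ∀ S : Set ℝ, volume (r • S) = ENNReal.ofReal r * volume S :=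
    fun hr S => by simp [Measure.addHaar_smul, abs_of_pos hr]
  rw [← hscale hs, ← hscale ht]
  exact volume_add_volume_le_volume_add (hA.const_smul_of_ne_zero hs.ne')
    (hB.const_smul_of_ne_zero ht.ne') hA₀.smul_set hB₀.smul_set

theorem lintegral_eq_lintegral_Ioi_measure_ofReal_lt {α : Type*} [MeasurableSpace α]
    {μ : Measure α} {f : α → ℝ≥0∞} (hf : Measurable f) (hfin : ∀ x, f x ≠ ∞) :
    ∫⁻ x, f x ∂μ = ∫⁻ t in Ioi (0 : ℝ), μ {x | ENNReal.ofReal t < f x} := by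
  have hcake := lintegral_eq_lintegral_meas_lt (f := fun x => (f x).toReal) μ
    (.of_forall fun _ => ENNReal.toReal_nonneg) hf.ennreal_toReal.aemeasurable
  simp only [ENNReal.ofReal_toReal (hfin _)] at hcake
  rw [hcake]
  refine setLIntegral_congr_fun measurableSet_Ioi fun t ht => ?_
  simp only [ENNReal.ofReal_lt_iff_lt_toReal (le_of_lt ht) (hfin _)]

theorem rpow_mul_rpow_self_of_add_eq_one {s t : ℝ} (hs : 0 < s) (ht : 0 < t) (hst : s + t = 1)
    (x : ℝ≥0∞) : x ^ s * x ^ t = x := by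
  rw [← ENNReal.rpow_add_of_nonneg _ _ hs.le ht.le, hst, ENNReal.rpow_one]

theorem rpow_mul_rpow_le_ofReal_mul_add {s t : ℝ} (hs : 0 < s) (ht : 0 < t) (hst : s + t = 1)
    (x y : ℝ≥0∞) : x ^ s * y ^ t ≤ ENNReal.ofReal s * x + ENNReal.ofReal t * y := by
  have hconj : s⁻¹.HolderConjugate t⁻¹ := by
    rw [Real.holderConjugate_iff]
    exact ⟨(one_lt_inv₀ hs).2 (by linarith), by simpa using hst⟩
  have hyoung := ENNReal.young_inequality (x ^ s) (y ^ t) hconj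
  rwa [ENNReal.rpow_rpow_inv hs.ne', ENNReal.rpow_rpow_inv ht.ne', ENNReal.ofReal_inv_of_pos hs,
    ENNReal.ofReal_inv_of_pos ht, div_eq_mul_inv, div_eq_mul_inv, inv_inv, inv_inv, mul_comm x,
    mul_comm y] at hyoung

theorem superlevel_smul_add_subset {E : Type*} [AddCommMonoid E] [Module ℝ E]
    {f g h : E → ℝ≥0∞} {s t : ℝ} (hs : 0 < s) (ht : 0 < t) (hst : s + t = 1)
    (hfgh : ∀ x y, f x ^ s * g y ^ t ≤ h (s • x + t • y)) (c : ℝ≥0∞) :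
    s • {x | c < f x} + t • {x | c < g x} ⊆ {x | c < h x} := by
  rintro _ ⟨_, ⟨x, hx, rfl⟩, _, ⟨y, hy, rfl⟩, rfl⟩
  calc c = c ^ s * c ^ t := (rpow_mul_rpow_self_of_add_eq_one hs ht hst c).symm
    _ < f x ^ s * g y ^ t :=
        ENNReal.mul_lt_mul (ENNReal.rpow_lt_rpow hx hs) (ENNReal.rpow_lt_rpow hy ht)
    _ ≤ h (s • x + t • y) := hfgh x y

theorem ofReal_mul_lintegral_add_le_lintegral_of_iSup_eq_one {f g h : ℝ → ℝ≥0∞}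
    (hf : Measurable f) (hg : Measurable g) (hh : Measurable h) {s t : ℝ} (hs : 0 < s)
    (ht : 0 < t) (hst : s + t = 1) (hfgh : ∀ x y, f x ^ s * g y ^ t ≤ h (s • x + t • y))
    (hf₁ : ⨆ x, f x = 1) (hg₁ : ⨆ x, g x = 1) :
    ENNReal.ofReal s * (∫⁻ x, f x) + ENNReal.ofReal t * (∫⁻ x, g x) ≤ ∫⁻ x, h x := by
  have hf_le : ∀ x, f x ≤ 1 := fun x => hf₁ ▸ le_iSup f x
  have hg_le : ∀ x, g x ≤ 1 := fun x => hg₁ ▸ le_iSup g x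
  have hmin_le : ∀ x, min (h x) 1 ≤ 1 := fun x => min_le_right _ _
  have hne_top : ∀ {a : ℝ≥0∞}, a ≤ 1 → a ≠ ∞ := ne_top_of_le_ne_top ENNReal.one_ne_top
  refine le_trans ?_ (lintegral_mono fun x => min_le_left (h x) 1)
  rw [lintegral_eq_lintegral_Ioi_measure_ofReal_lt hf fun x => hne_top (hf_le x),
    lintegral_eq_lintegral_Ioi_measure_ofReal_lt hg fun x => hne_top (hg_le x),
    lintegral_eq_lintegral_Ioi_measure_ofReal_lt (hh.min measurable_const)
      fun x => hne_top (hmin_le x),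
    ← lintegral_const_mul' _ _ ENNReal.ofReal_ne_top,
    ← lintegral_const_mul' _ _ ENNReal.ofReal_ne_top]
  refine (le_lintegral_add _ _).trans (setLIntegral_mono' measurableSet_Ioi fun r _ => ?_)
  rcases lt_or_ge (ENNReal.ofReal r) 1 with hr | hr
  · have hsub : s • {x | ENNReal.ofReal r < f x} + t • {x | ENNReal.ofReal r < g x} ⊆
        {x | ENNReal.ofReal r < min (h x) 1} := fun z hz =>
      lt_min (superlevel_smul_add_subset hs ht hst hfgh _ hz) hr
    exact (ofReal_mul_volume_add_le_volume_smul_add_smul (measurableSet_lt measurable_const hf)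
      (measurableSet_lt measurable_const hg) (lt_iSup_iff.1 (hr.trans_eq hf₁.symm))
      (lt_iSup_iff.1 (hr.trans_eq hg₁.symm)) hs ht).trans (measure_mono hsub)
  · have hempty : ∀ {F : ℝ → ℝ≥0∞}, (∀ x, F x ≤ 1) → {x | ENNReal.ofReal r < F x} = ∅ :=
      fun hF => eq_empty_of_forall_notMem fun x hx => ((hF x).trans hr).not_gt hx
    simp [hempty hf_le, hempty hg_le]

/-- The Prékopa–Leindler inequality as a property of a measure on a real vector space. It holds for
Lebesgue measure and, in this functional form, passes to products and linear images. -/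
def IsPrekopaLeindler {E : Type*} [AddCommMonoid E] [Module ℝ E] [MeasurableSpace E]
    (μ : Measure E) : Prop :=
  ∀ ⦃f g h : E → ℝ≥0∞⦄, Measurable f → Measurable g → Measurable h →
    ∀ ⦃s t : ℝ⦄, 0 < s → 0 < t → s + t = 1 →
      (∀ x y, f x ^ s * g y ^ t ≤ h (s • x + t • y)) →
        (∫⁻ x, f x ∂μ) ^ s * (∫⁻ x, g x ∂μ) ^ t ≤ ∫⁻ x, h x ∂μ

theorem lintegral_rpow_mul_le_of_iSup_ne_top {f g h : ℝ → ℝ≥0∞}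
    (hf : Measurable f) (hg : Measurable g) (hh : Measurable h) {s t : ℝ} (hs : 0 < s)
    (ht : 0 < t) (hst : s + t = 1) (hfgh : ∀ x y, f x ^ s * g y ^ t ≤ h (s • x + t • y))
    (hf_top : ⨆ x, f x ≠ ∞) (hg_top : ⨆ x, g x ≠ ∞) :
    (∫⁻ x, f x) ^ s * (∫⁻ x, g x) ^ t ≤ ∫⁻ x, h x := by
  by_cases hf₀ : ⨆ x, f x = 0
  · simp [ENNReal.iSup_eq_zero.1 hf₀, ENNReal.zero_rpow_of_pos hs]
  by_cases hg₀ : ⨆ x, g x = 0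
  · simp [ENNReal.iSup_eq_zero.1 hg₀, ENNReal.zero_rpow_of_pos ht]
  set a := ⨆ x, f x
  set b := ⨆ x, g x
  have has_top : a ^ s ≠ ∞ := ENNReal.rpow_ne_top_of_nonneg hs.le hf_top
  have hbt_top : b ^ t ≠ ∞ := ENNReal.rpow_ne_top_of_nonneg ht.le hg_top
  have hdiv : ∀ x y : ℝ≥0∞, (x / a) ^ s * (y / b) ^ t = x ^ s * y ^ t / (a ^ s * b ^ t) := by
    intro x y
    rw [ENNReal.div_rpow_of_nonneg _ _ hs.le, ENNReal.div_rpow_of_nonneg _ _ ht.le, div_eq_mul_inv,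
      div_eq_mul_inv, div_eq_mul_inv, mul_mul_mul_comm,
      ENNReal.mul_inv (.inr hbt_top) (.inl has_top)]
  have hlintegral_div : ∀ {F : ℝ → ℝ≥0∞}, Measurable F → ∀ c, ∫⁻ x, F x / c = (∫⁻ x, F x) / c :=
    fun hF c => by simp only [div_eq_mul_inv, lintegral_mul_const _ hF]
  have hnormalized := ofReal_mul_lintegral_add_le_lintegral_of_iSup_eq_one (hf.div_const a)
    (hg.div_const b) (hh.div_const (a ^ s * b ^ t)) hs ht hst
    (fun x y => (hdiv _ _).trans_le (ENNReal.div_le_div_right (hfgh x y) _))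
    (by rw [← ENNReal.iSup_div, ENNReal.div_self hf₀ hf_top])
    (by rw [← ENNReal.iSup_div, ENNReal.div_self hg₀ hg_top])
  have hamgm := (rpow_mul_rpow_le_ofReal_mul_add hs ht hst _ _).trans hnormalized
  rw [hlintegral_div hf, hlintegral_div hg, hlintegral_div hh, hdiv] at hamgm
  have hab₀ : a ^ s * b ^ t ≠ 0 := by simp [ENNReal.rpow_eq_zero_iff, hf₀, hg₀, hf_top, hg_top]
  have hab_top : a ^ s * b ^ t ≠ ∞ := ENNReal.mul_ne_top has_top hbt_top
  rwa [ENNReal.div_le_iff hab₀ hab_top, ENNReal.div_mul_cancel hab₀ hab_top] at hamgm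

theorem lintegral_eq_iSup_lintegral_min_natCast {α : Type*} [MeasurableSpace α] {μ : Measure α}
    {f : α → ℝ≥0∞} (hf : Measurable f) : ∫⁻ x, f x ∂μ = ⨆ n : ℕ, ∫⁻ x, min (f x) n ∂μ := by
  rw [← lintegral_iSup (fun n => hf.min measurable_const)
    fun _ _ hij _ => min_le_min le_rfl (by exact_mod_cast hij)]
  refine lintegral_congr fun x => ?_
  rw [← inf_iSup_eq, ENNReal.iSup_natCast, inf_top_eq]

theorem isPrekopaLeindler_volume_real : IsPrekopaLeindler (volume : Measure ℝ) := by
  intro f g h hf hg hh s t hs ht hst hfgh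
  have hiSup_rpow : ∀ {r : ℝ}, 0 < r → ∀ u : ℕ → ℝ≥0∞, (⨆ n, u n) ^ r = ⨆ n, u n ^ r :=
    fun hr u => (ENNReal.orderIsoRpow _ hr).map_iSup u
  have hiSup_ne_top : ∀ (F : ℝ → ℝ≥0∞) (n : ℕ), ⨆ x, min (F x) n ≠ ∞ := fun F n =>
    ne_top_of_le_ne_top (ENNReal.natCast_ne_top n) (iSup_le fun x => min_le_right _ _)
  rw [lintegral_eq_iSup_lintegral_min_natCast hf, lintegral_eq_iSup_lintegral_min_natCast hg,
    hiSup_rpow hs, hiSup_rpow ht, ENNReal.iSup_mul]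
  refine iSup_le fun n => ?_
  rw [ENNReal.mul_iSup]
  refine iSup_le fun k => ?_
  refine lintegral_rpow_mul_le_of_iSup_ne_top (hf.min measurable_const) (hg.min measurable_const)
    hh hs ht hst (fun x y => le_trans ?_ (hfgh x y)) (hiSup_ne_top f n) (hiSup_ne_top g k)
  gcongr <;> exact min_le_left _ _

section Stability

variable {E F : Type*} [AddCommMonoid E] [Module ℝ E] [MeasurableSpace E] [AddCommMonoid F]
  [Module ℝ F] [MeasurableSpace F]

theorem IsPrekopaLeindler.dirac_zero : IsPrekopaLeindler (Measure.dirac (0 : E)) := by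
  intro f g h hf hg hh s t _ _ _ hfgh
  simpa [lintegral_dirac' _ hf, lintegral_dirac' _ hg, lintegral_dirac' _ hh] using hfgh 0 0

theorem IsPrekopaLeindler.map {μ : Measure E} (hμ : IsPrekopaLeindler μ) (L : E →ₗ[ℝ] F)
    (hL : Measurable L) : IsPrekopaLeindler (μ.map L) := by
  intro f g h hf hg hh s t hs ht hst hfgh
  rw [lintegral_map hf hL, lintegral_map hg hL, lintegral_map hh hL]
  exact hμ (hf.comp hL) (hg.comp hL) (hh.comp hL) hs ht hst fun x y => by
    simpa only [Function.comp_apply, map_add, map_smul] using hfgh (L x) (L y)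

theorem IsPrekopaLeindler.prod {μ : Measure E} {ν : Measure F} [SFinite ν]
    (hμ : IsPrekopaLeindler μ) (hν : IsPrekopaLeindler ν) : IsPrekopaLeindler (μ.prod ν) := by
  intro f g h hf hg hh s t hs ht hst hfgh
  rw [lintegral_prod _ hf.aemeasurable, lintegral_prod _ hg.aemeasurable,
    lintegral_prod _ hh.aemeasurable]
  refine hμ hf.lintegral_prod_right' hg.lintegral_prod_right' hh.lintegral_prod_right' hs ht hst
    fun x₁ x₂ => ?_
  exact hν (hf.comp measurable_prodMk_left) (hg.comp measurable_prodMk_left)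
    (hh.comp measurable_prodMk_left) hs ht hst fun y₁ y₂ => hfgh (x₁, y₁) (x₂, y₂)

end Stability

theorem isPrekopaLeindler_volume_pi : ∀ n : ℕ, IsPrekopaLeindler (volume : Measure (Fin n → ℝ))
  | 0 => by
    rw [Measure.volume_pi_eq_dirac (0 : Fin 0 → ℝ)]
    exact .dirac_zero
  | n + 1 => by
    have hcons : MeasurePreserving (Fin.consLinearEquiv ℝ fun _ : Fin (n + 1) => ℝ) volume
        volume := by
      have heq : ⇑(Fin.consLinearEquiv ℝ fun _ : Fin (n + 1) => ℝ) =
          (MeasurableEquiv.piFinSuccAbove (fun _ : Fin (n + 1) => ℝ) 0).symm := by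
        ext x i
        refine Fin.cases ?_ (fun j => ?_) i <;> simp [MeasurableEquiv.piFinSuccAbove]
      rw [heq]
      exact (volume_preserving_piFinSuccAbove (fun _ : Fin (n + 1) => ℝ) 0).symm
    rw [← hcons.map_eq]
    exact (isPrekopaLeindler_volume_real.prod (isPrekopaLeindler_volume_pi n)).map
      (Fin.consLinearEquiv ℝ fun _ => ℝ).toLinearMap hcons.measurable

theorem isPrekopaLeindler_volume {E : Type*} [NormedAddCommGroup E] [InnerProductSpace ℝ E]
    [FiniteDimensional ℝ E] [MeasurableSpace E] [BorelSpace E] :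
    IsPrekopaLeindler (volume : Measure E) := by
  let L : (Fin (Module.finrank ℝ E) → ℝ) ≃ₗ[ℝ] E :=
    (WithLp.linearEquiv 2 ℝ _).symm ≪≫ₗ (stdOrthonormalBasis ℝ E).repr.symm.toLinearEquiv
  have hL : MeasurePreserving L volume volume :=
    (stdOrthonormalBasis ℝ E).measurePreserving_repr_symm.comp (PiLp.volume_preserving_toLp _)
  rw [← hL.map_eq]
  exact (isPrekopaLeindler_volume_pi _).map L.toLinearMap hL.measurable

end PrekopaLeindler

section LogConcave

open Set
open scoped ENNReal Pointwise RealInnerProductSpace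

/-- Log-concavity of a function with values in `[0, ∞]`, in multiplicative form so that the values
`0` and `∞` need no convention for the logarithm. -/
def LogConcave {E : Type*} [AddCommMonoid E] [Module ℝ E] (q : E → ℝ≥0∞) : Prop :=
  ∀ ⦃x y : E⦄ ⦃s t : ℝ⦄, 0 < s → 0 < t → s + t = 1 → q x ^ s * q y ^ t ≤ q (s • x + t • y)

namespace LogConcave

theorem convex_superlevel {E : Type*} [AddCommMonoid E] [Module ℝ E] {q : E → ℝ≥0∞}
    (hq : LogConcave q) (c : ℝ≥0∞) : Convex ℝ {x | c < q x} :=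
  convex_iff_forall_pos.2 fun _ hx _ hy _ _ hs ht hst =>
    superlevel_smul_add_subset hs ht hst (fun _ _ => hq hs ht hst) c
      (add_mem_add (smul_mem_smul_set hx) (smul_mem_smul_set hy))

theorem comp_affineMap {E F : Type*} [AddCommGroup E] [Module ℝ E] [AddCommGroup F] [Module ℝ F]
    {q : E → ℝ≥0∞} (hq : LogConcave q) (A : F →ᵃ[ℝ] E) : LogConcave (q ∘ A) := by
  intro x y s t hs ht hst
  simpa only [Function.comp_apply, Convex.combo_affine_apply hst] using hq hs ht hst

theorem indicator {E : Type*} [AddCommMonoid E] [Module ℝ E] {q : E → ℝ≥0∞} (hq : LogConcave q)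
    {K : Set E} (hK : Convex ℝ K) : LogConcave (K.indicator q) := by
  intro x y s t hs ht hst
  by_cases hx : x ∈ K
  · by_cases hy : y ∈ K
    · simpa only [indicator_of_mem hx, indicator_of_mem hy,
        indicator_of_mem (hK hx hy hs.le ht.le hst)] using hq hs ht hst
    · simp [indicator_of_notMem hy, ENNReal.zero_rpow_of_pos ht]
  · simp [indicator_of_notMem hx, ENNReal.zero_rpow_of_pos hs]

theorem lintegral_prodMk {E F : Type*} [AddCommMonoid E] [Module ℝ E] [MeasurableSpace E]
    [AddCommMonoid F] [Module ℝ F] [MeasurableSpace F] {ν : Measure F} (hν : IsPrekopaLeindler ν)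
    {q : E × F → ℝ≥0∞} (hqm : Measurable q) (hq : LogConcave q) :
    LogConcave fun x => ∫⁻ y, q (x, y) ∂ν := fun _ _ _ _ hs ht hst =>
  hν (hqm.comp measurable_prodMk_left) (hqm.comp measurable_prodMk_left)
    (hqm.comp measurable_prodMk_left) hs ht hst fun _ _ => hq hs ht hst

theorem concaveOn_log_toReal {E : Type*} [AddCommMonoid E] [Module ℝ E] {q : E → ℝ≥0∞}
    (hq : LogConcave q) (hfin : ∀ x, q x ≠ ∞) :
    ConcaveOn ℝ {x | 0 < q x} fun x => Real.log (q x).toReal := by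
  refine concaveOn_iff_forall_pos.2 ⟨hq.convex_superlevel 0, fun x hx y hy s t hs ht hst => ?_⟩
  have hx' : 0 < (q x).toReal := ENNReal.toReal_pos (ne_of_gt hx) (hfin x)
  have hy' : 0 < (q y).toReal := ENNReal.toReal_pos (ne_of_gt hy) (hfin y)
  have hreal : (q x).toReal ^ s * (q y).toReal ^ t ≤ (q (s • x + t • y)).toReal := by
    simpa only [ENNReal.toReal_mul, ENNReal.toReal_rpow] using
      ENNReal.toReal_mono (hfin _) (hq hs ht hst (x := x) (y := y))
  have hlog := Real.log_le_log (by positivity) hreal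
  rwa [Real.log_mul (by positivity) (by positivity), Real.log_rpow hx', Real.log_rpow hy'] at hlog

section FiniteDimensional

variable {E : Type*} [NormedAddCommGroup E] [NormedSpace ℝ E] [FiniteDimensional ℝ E]

theorem continuousOn_interior {q : E → ℝ≥0∞} (hq : LogConcave q) (hfin : ∀ x, q x ≠ ∞) :
    ContinuousOn q (interior {x | 0 < q x}) := by
  have hexp := ENNReal.continuous_ofReal.comp_continuousOn
    (Real.continuous_exp.comp_continuousOn (hq.concaveOn_log_toReal hfin).continuousOn_interior)
  refine hexp.congr fun x hx => ?_
  have hpos : 0 < (q x).toReal :=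
    ENNReal.toReal_pos (ne_of_gt (interior_subset (s := {x | 0 < q x}) hx)) (hfin x)
  simp only [Function.comp_apply, Real.exp_log hpos, ENNReal.ofReal_toReal (hfin x)]

theorem exists_measurable_ae_eq [MeasurableSpace E] [BorelSpace E] (μ : Measure E)
    [μ.IsAddHaarMeasure] {q : E → ℝ≥0∞} (hq : LogConcave q) (hfin : ∀ x, q x ≠ ∞) :
    ∃ q' : E → ℝ≥0∞, Measurable q' ∧ LogConcave q' ∧ q =ᵐ[μ] q' := by
  classical
  set K := {x | 0 < q x}
  have hK : Convex ℝ K := hq.convex_superlevel 0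
  refine ⟨(interior K).indicator q, ?_, hq.indicator hK.interior, ?_⟩
  · rw [← piecewise_eq_indicator]
    exact (hq.continuousOn_interior hfin).measurable_piecewise continuousOn_const
      isOpen_interior.measurableSet
  · filter_upwards [compl_mem_ae_iff.2 (hK.addHaar_frontier μ)] with x hx
    by_cases hxK : x ∈ interior K
    · rw [indicator_of_mem hxK]
    · have hxK' : x ∉ K := fun h => hx ⟨subset_closure h, hxK⟩
      rw [indicator_of_notMem hxK, ← nonpos_iff_eq_zero]
      exact not_lt.1 hxK'

end FiniteDimensional

end LogConcave

theorem map_withDensity_comp {α β : Type*} [MeasurableSpace α]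
    [MeasurableSpace β] {μ : Measure α} {ν : Measure β} {f : α → β} (hf : MeasurePreserving f μ ν)
    {q : β → ℝ≥0∞} (hq : Measurable q) :
    (μ.withDensity (q ∘ f)).map f = ν.withDensity q := by
  ext s hs
  rw [Measure.map_apply hf.measurable hs, withDensity_apply _ (hf.measurable hs),
    withDensity_apply _ hs]
  exact hf.setLIntegral_comp_preimage hs hq

/-- A measure with a log-concave density with respect to the volume. The density is required to be
measurable, which costs nothing by `LogConcave.exists_measurable_ae_eq`. -/
def HasLogConcaveDensity {E : Type*} [AddCommMonoid E] [Module ℝ E] [MeasureSpace E]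
    (P : Measure E) : Prop :=
  ∃ q : E → ℝ≥0∞, Measurable q ∧ LogConcave q ∧ P = volume.withDensity q

namespace HasLogConcaveDensity

theorem measure_rpow_mul_le {E : Type*} [AddCommMonoid E] [Module ℝ E] [MeasureSpace E]
    (hPL : IsPrekopaLeindler (volume : Measure E)) {P : Measure E} (hP : HasLogConcaveDensity P)
    {A B D : Set E} (hA : MeasurableSet A) (hB : MeasurableSet B) (hD : MeasurableSet D) {s t : ℝ}
    (hs : 0 < s) (ht : 0 < t) (hst : s + t = 1) (hABD : s • A + t • B ⊆ D) :
    P A ^ s * P B ^ t ≤ P D := by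
  obtain ⟨q, hqm, hq, rfl⟩ := hP
  simp only [withDensity_apply _ hA, withDensity_apply _ hB, withDensity_apply _ hD,
    ← lintegral_indicator hA, ← lintegral_indicator hB, ← lintegral_indicator hD]
  refine hPL (hqm.indicator hA) (hqm.indicator hB) (hqm.indicator hD) hs ht hst fun x y => ?_
  by_cases hx : x ∈ A
  · by_cases hy : y ∈ B
    · have hxy := hABD (add_mem_add (smul_mem_smul_set hx) (smul_mem_smul_set hy))
      simpa only [indicator_of_mem hx, indicator_of_mem hy, indicator_of_mem hxy] using
        hq hs ht hst
    · simp [indicator_of_notMem hy, ENNReal.zero_rpow_of_pos ht]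
  · simp [indicator_of_notMem hx, ENNReal.zero_rpow_of_pos hs]

theorem map_affineEquiv {E F : Type*} [AddCommGroup E] [Module ℝ E] [MeasureSpace E]
    [AddCommGroup F] [Module ℝ F] [MeasureSpace F] {P : Measure E} (hP : HasLogConcaveDensity P)
    (e : E ≃ᵃ[ℝ] F) (he : MeasurePreserving e volume volume) (he_symm : Measurable e.symm) :
    HasLogConcaveDensity (P.map e) := by
  obtain ⟨q, hqm, hq, rfl⟩ := hP
  refine ⟨q ∘ e.symm, hqm.comp he_symm, hq.comp_affineMap e.symm.toAffineMap, ?_⟩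
  rw [← map_withDensity_comp he (hqm.comp he_symm), Function.comp_assoc,
    show e.symm ∘ e = id from funext e.symm_apply_apply, Function.comp_id]

theorem map_fst {E F : Type*} [AddCommMonoid E] [Module ℝ E] [MeasureSpace E]
    [SFinite (volume : Measure E)] [AddCommMonoid F] [Module ℝ F] [MeasureSpace F]
    [SFinite (volume : Measure F)]
    (hPL : IsPrekopaLeindler (volume : Measure F)) {P : Measure (E × F)}
    (hP : HasLogConcaveDensity P) : HasLogConcaveDensity (P.map Prod.fst) := by
  obtain ⟨q, hqm, hq, rfl⟩ := hP
  refine ⟨fun x => ∫⁻ y, q (x, y), hqm.lintegral_prod_right', hq.lintegral_prodMk hPL hqm, ?_⟩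
  ext s hs
  rw [Measure.map_apply measurable_fst hs, withDensity_apply _ (measurable_fst hs),
    withDensity_apply _ hs, ← prod_univ, Measure.volume_eq_prod,
    setLIntegral_prod _ hqm.aemeasurable]
  simp only [Measure.restrict_univ]

section InnerProductSpace

variable {E F : Type*} [NormedAddCommGroup E] [InnerProductSpace ℝ E] [FiniteDimensional ℝ E]
  [MeasurableSpace E] [BorelSpace E] [NormedAddCommGroup F] [InnerProductSpace ℝ F]
  [FiniteDimensional ℝ F] [MeasurableSpace F] [BorelSpace F] {P : Measure E}

theorem map_orthogonalProjectionOnto (hP : HasLogConcaveDensity P) (K : Submodule ℝ E) :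
    HasLogConcaveDensity (P.map K.orthogonalProjectionOnto) := by
  let split : E ≃ₗ[ℝ] K × Kᗮ :=
    K.orthogonalDecomposition.toLinearEquiv ≪≫ₗ WithLp.linearEquiv 2 ℝ (K × Kᗮ)
  have hsplit : MeasurePreserving split volume volume :=
    (WithLp.volume_preserving_ofLp K Kᗮ).comp K.orthogonalDecomposition.measurePreserving
  have hfst := (hP.map_affineEquiv split.toAffineEquiv hsplit
    split.symm.toContinuousLinearEquiv.continuous.measurable).map_fst isPrekopaLeindler_volume
  exact Measure.map_map measurable_fst hsplit.measurable ▸ hfst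

theorem map_adjoint (hP : HasLogConcaveDensity P) (ι : F →ₗᵢ[ℝ] E) :
    HasLogConcaveDensity (P.map ι.toContinuousLinearMap.adjoint) := by
  let K := LinearMap.range ι.toLinearMap
  let e : F ≃ₗᵢ[ℝ] K := ι.equivRange
  have hadjoint : ⇑ι.toContinuousLinearMap.adjoint = e.symm ∘ K.orthogonalProjectionOnto := by
    funext x
    refine ext_inner_left ℝ fun y => ?_
    calc ⟪y, ι.toContinuousLinearMap.adjoint x⟫ = ⟪(e y : E), x⟫ :=
          ContinuousLinearMap.adjoint_inner_right _ _ _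
      _ = ⟪e y, K.orthogonalProjectionOnto x⟫ :=
          (Submodule.inner_orthogonalProjectionOnto_eq_of_mem_left (e y) x).symm
      _ = ⟪y, e.symm (K.orthogonalProjectionOnto x)⟫ := by
          rw [← e.inner_map_map y, e.apply_symm_apply]
  have hmap := (hP.map_orthogonalProjectionOnto K).map_affineEquiv
    e.symm.toLinearEquiv.toAffineEquiv e.symm.measurePreserving e.continuous.measurable
  rw [hadjoint, ← Measure.map_map e.symm.continuous.measurable
    K.orthogonalProjectionOnto.continuous.measurable]
  exact hmap

end InnerProductSpace

end HasLogConcaveDensity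

end LogConcave

section BorellTails

open Set
open scoped ENNReal Pointwise

/-- The tail estimate that Borell's lemma gives for the slabs `{|Y| ≤ R}`, which every linear
functional of a log-concave vector satisfies. -/
def HasBorellTails {Ω : Type*} [MeasurableSpace Ω] (Y : Ω → ℝ) (ν : Measure Ω) : Prop :=
  ∀ R : ℝ, ν.real {ω | 3 * R < |Y ω|} * ν.real {ω | |Y ω| ≤ R} ≤ ν.real {ω | R < |Y ω|} ^ 2

theorem HasLogConcaveDensity.hasBorellTails {E : Type*} [AddCommGroup E] [Module ℝ E]
    [MeasureSpace E] (hPL : IsPrekopaLeindler (volume : Measure E)) {P : Measure E}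
    [IsFiniteMeasure P] (hP : HasLogConcaveDensity P) (φ : E →ₗ[ℝ] ℝ) (hφ : Measurable φ) :
    HasBorellTails φ P := by
  intro R
  have hsub : (1 / 2 : ℝ) • {x | 3 * R < |φ x|} + (1 / 2 : ℝ) • {x | |φ x| ≤ R} ⊆
      {x | R < |φ x|} := by
    rintro _ ⟨_, ⟨x, hx, rfl⟩, _, ⟨y, hy, rfl⟩, rfl⟩
    have hmid : φ x = 2 * φ ((1 / 2 : ℝ) • x + (1 / 2 : ℝ) • y) - φ y := by
      simp only [map_add, map_smul, smul_eq_mul]; ring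
    have htri := abs_sub (2 * φ ((1 / 2 : ℝ) • x + (1 / 2 : ℝ) • y)) (φ y)
    rw [← hmid, abs_mul, abs_two] at htri
    simp only [mem_ofPred_eq] at hx hy ⊢
    linarith
  have hmeas := hP.measure_rpow_mul_le hPL (measurableSet_lt measurable_const hφ.abs)
    (measurableSet_le hφ.abs measurable_const) (measurableSet_lt measurable_const hφ.abs)
    one_half_pos one_half_pos (add_halves 1) hsub
  have hsqrt := ENNReal.toReal_mono (measure_ne_top P _) hmeas
  rw [ENNReal.toReal_mul, ← ENNReal.toReal_rpow, ← ENNReal.toReal_rpow, ← Real.sqrt_eq_rpow,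
    ← Real.sqrt_eq_rpow, ← Real.sqrt_mul ENNReal.toReal_nonneg] at hsqrt
  exact (Real.sqrt_le_left ENNReal.toReal_nonneg).1 hsqrt

section RandomVariable

variable {Ω : Type*} [MeasurableSpace Ω] {ν : Measure Ω} {Y : Ω → ℝ} {C : ℝ}

theorem measureReal_lt_abs_mul_sq_le (hY₂ : Integrable (fun ω => Y ω ^ 2) ν) [IsFiniteMeasure ν]
    {t : ℝ} (ht : 0 ≤ t) : ν.real {ω | t < |Y ω|} * t ^ 2 ≤ ∫ ω, Y ω ^ 2 ∂ν := by
  have hsub : {ω | t < |Y ω|} ⊆ {ω | t ^ 2 ≤ Y ω ^ 2} := fun ω hω => by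
    simpa only [mem_ofPred_eq, sq_abs] using pow_le_pow_left₀ ht (le_of_lt hω) 2
  calc ν.real {ω | t < |Y ω|} * t ^ 2 ≤ t ^ 2 * ν.real {ω | t ^ 2 ≤ Y ω ^ 2} := by
        rw [mul_comm]
        exact mul_le_mul_of_nonneg_left (measureReal_mono hsub) (sq_nonneg t)
    _ ≤ ∫ ω, Y ω ^ 2 ∂ν :=
        mul_meas_ge_le_integral_of_nonneg (.of_forall fun _ => sq_nonneg _) hY₂ _

theorem integrable_of_integrable_sq [IsFiniteMeasure ν] (hY : AEStronglyMeasurable Y ν)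
    (hY₂ : Integrable (fun ω => Y ω ^ 2) ν) : Integrable Y ν :=
  ((memLp_two_iff_integrable_sq hY).2 hY₂).integrable one_le_two

theorem sq_integral_sq_le_integral_abs_mul_integral_abs_cube (hY₁ : Integrable Y ν)
    (hY₂ : Integrable (fun ω => Y ω ^ 2) ν) (hY₃ : Integrable (fun ω => |Y ω| ^ 3) ν) :
    (∫ ω, Y ω ^ 2 ∂ν) ^ 2 ≤ (∫ ω, |Y ω| ∂ν) * ∫ ω, |Y ω| ^ 3 ∂ν := by
  have hquad : ∀ r : ℝ, 0 ≤ (∫ ω, |Y ω| ∂ν) * (r * r) + (-2 * ∫ ω, Y ω ^ 2 ∂ν) * r +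
      ∫ ω, |Y ω| ^ 3 ∂ν := by
    intro r
    have hexpand : ∫ ω, |Y ω| * (r - |Y ω|) ^ 2 ∂ν = (∫ ω, |Y ω| ∂ν) * (r * r) +
        (-2 * ∫ ω, Y ω ^ 2 ∂ν) * r + ∫ ω, |Y ω| ^ 3 ∂ν := by
      have hpoly : ∀ ω, |Y ω| * (r - |Y ω|) ^ 2 =
          r * r * |Y ω| + -2 * r * Y ω ^ 2 + |Y ω| ^ 3 := fun ω => by
        rw [← sq_abs (Y ω)]; ring
      have hquad : Integrable (fun ω => r * r * |Y ω| + -2 * r * Y ω ^ 2) ν :=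
        (hY₁.abs.const_mul _).add (hY₂.const_mul _)
      simp only [hpoly]
      rw [integral_add hquad hY₃,
        integral_add (hY₁.abs.const_mul _) (hY₂.const_mul _), integral_const_mul,
        integral_const_mul]
      ring
    exact hexpand ▸ integral_nonneg fun ω => by positivity
  have hdiscrim := discrim_le_zero hquad
  rw [discrim] at hdiscrim
  linarith

variable [IsProbabilityMeasure ν]

theorem HasBorellTails.measureReal_lt_abs_mul_sq_mul_le (hB : HasBorellTails Y ν)
    (hY : Measurable Y) (hY₂ : Integrable (fun ω => Y ω ^ 2) ν) (hC : ∫ ω, Y ω ^ 2 ∂ν ≤ C) {t : ℝ}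
    (ht : 0 ≤ t) :
    ν.real {ω | t < |Y ω|} * t ^ 2 * (1 + t ^ 2) ≤ 9 * C * (1 + 18 * C) := by
  have hC₀ : 0 ≤ C := (integral_nonneg fun ω => sq_nonneg (Y ω)).trans hC
  have hcheb := (measureReal_lt_abs_mul_sq_le hY₂ ht).trans hC
  set w := ν.real {ω | t < |Y ω|}
  rcases le_or_gt (t ^ 2) (18 * C) with hsmall | hlarge
  · calc w * t ^ 2 * (1 + t ^ 2) ≤ C * (1 + 18 * C) := by gcongr
      _ ≤ 9 * C * (1 + 18 * C) := by nlinarith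
  · have hcheb₃ := (measureReal_lt_abs_mul_sq_le hY₂ (div_nonneg ht zero_le_three)).trans hC
    have hcompl : ν.real {ω | |Y ω| ≤ t / 3} = 1 - ν.real {ω | t / 3 < |Y ω|} := by
      rw [← probReal_compl_eq_one_sub (measurableSet_lt measurable_const hY.abs)]
      simp only [compl_ofPred, not_lt]
    have hborell := hB (t / 3)
    rw [hcompl, mul_div_cancel₀ t three_ne_zero] at hborell
    set z := ν.real {ω | t / 3 < |Y ω|}
    have ht₂ : 0 < t ^ 2 := by linarith
    have hzt : z * t ^ 2 ≤ 9 * C := by linarith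
    have hz : z ≤ 1 / 2 := by nlinarith
    have hw₀ : 0 ≤ w := measureReal_nonneg
    have hz₀ : 0 ≤ z := measureReal_nonneg
    have hwz : w ≤ 2 * z ^ 2 := by nlinarith
    have hquartic : w * t ^ 2 * t ^ 2 ≤ 2 * (9 * C) ^ 2 :=
      calc w * t ^ 2 * t ^ 2 ≤ 2 * z ^ 2 * t ^ 2 * t ^ 2 := by gcongr
        _ = 2 * (z * t ^ 2) ^ 2 := by ring
        _ ≤ 2 * (9 * C) ^ 2 := by gcongr
    linarith

/-- A bound for `E|Y|³` in terms of a bound `C` for `E[Y²]`. -/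
def thirdMomentBound (C : ℝ) : ℝ := 27 * Real.pi * C * (1 + 18 * C)

theorem HasBorellTails.lintegral_abs_cube_le (hB : HasBorellTails Y ν)
    (hY : Measurable Y) (hY₂ : Integrable (fun ω => Y ω ^ 2) ν) (hC : ∫ ω, Y ω ^ 2 ∂ν ≤ C) :
    ∫⁻ ω, ENNReal.ofReal (|Y ω| ^ 3) ∂ν ≤ ENNReal.ofReal (thirdMomentBound C) := by
  have hC₀ : 0 ≤ C := (integral_nonneg fun ω => sq_nonneg (Y ω)).trans hC
  have htail : ∀ t ∈ Ioi (0 : ℝ), ν {ω | t < |Y ω|} * ENNReal.ofReal (t ^ ((3 : ℝ) - 1)) ≤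
      ENNReal.ofReal (9 * C * (1 + 18 * C) * (1 + t ^ 2)⁻¹) := by
    intro t ht
    rw [show (3 : ℝ) - 1 = (2 : ℕ) by norm_num, Real.rpow_natCast, ← ofReal_measureReal,
      ← ENNReal.ofReal_mul measureReal_nonneg]
    refine ENNReal.ofReal_le_ofReal ((le_mul_inv_iff₀ (by positivity)).2 ?_)
    exact hB.measureReal_lt_abs_mul_sq_mul_le hY hY₂ hC (le_of_lt ht)
  calc ∫⁻ ω, ENNReal.ofReal (|Y ω| ^ 3) ∂ν
      = ∫⁻ ω, ENNReal.ofReal (|Y ω| ^ (3 : ℝ)) ∂ν := by norm_cast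
    _ = ENNReal.ofReal 3 *
          ∫⁻ t in Ioi 0, ν {ω | t < |Y ω|} * ENNReal.ofReal (t ^ ((3 : ℝ) - 1)) :=
        lintegral_rpow_eq_lintegral_meas_lt_mul ν (.of_forall fun ω => abs_nonneg (Y ω))
          hY.abs.aemeasurable zero_lt_three
    _ ≤ ENNReal.ofReal 3 * ∫⁻ t, ENNReal.ofReal (9 * C * (1 + 18 * C) * (1 + t ^ 2)⁻¹) :=
        mul_le_mul_right ((setLIntegral_mono' measurableSet_Ioi htail).trans
          (setLIntegral_le_lintegral _ _)) _
    _ = ENNReal.ofReal (thirdMomentBound C) := by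
        rw [← ofReal_integral_eq_lintegral_ofReal (integrable_inv_one_add_sq.const_mul _)
          (.of_forall fun t => by positivity), integral_const_mul, integral_univ_inv_one_add_sq,
          ← ENNReal.ofReal_mul zero_le_three, thirdMomentBound]
        ring_nf

theorem HasBorellTails.integrable_abs_cube (hB : HasBorellTails Y ν)
    (hY : Measurable Y) (hY₂ : Integrable (fun ω => Y ω ^ 2) ν) :
    Integrable (fun ω => |Y ω| ^ 3) ν := by
  refine ⟨(hY.abs.pow_const 3).aestronglyMeasurable, ?_⟩
  rw [hasFiniteIntegral_iff_ofReal (.of_forall fun ω => by positivity)]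
  exact (hB.lintegral_abs_cube_le hY hY₂ le_rfl).trans_lt ENNReal.ofReal_lt_top

theorem HasBorellTails.integral_abs_cube_le (hB : HasBorellTails Y ν)
    (hY : Measurable Y) (hY₂ : Integrable (fun ω => Y ω ^ 2) ν) (hC : ∫ ω, Y ω ^ 2 ∂ν ≤ C) :
    ∫ ω, |Y ω| ^ 3 ∂ν ≤ thirdMomentBound C := by
  have hC₀ : 0 ≤ C := (integral_nonneg fun ω => sq_nonneg (Y ω)).trans hC
  have hbound := hB.lintegral_abs_cube_le hY hY₂ hC
  rwa [← ofReal_integral_eq_lintegral_ofReal (hB.integrable_abs_cube hY hY₂)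
    (.of_forall fun ω => by positivity), ENNReal.ofReal_le_ofReal_iff] at hbound
  unfold thirdMomentBound
  positivity

/-- A positive lower bound for `E|Y|` when `C⁻¹ ≤ E[Y²] ≤ C` and `Y` has Borell tails. -/
def absMomentBound (C : ℝ) : ℝ := (C ^ 2 * thirdMomentBound C)⁻¹

theorem absMomentBound_pos (hC : 0 < C) : 0 < absMomentBound C := by
  unfold absMomentBound thirdMomentBound
  positivity

theorem HasBorellTails.absMomentBound_le_integral_abs (hC : 0 < C) (hB : HasBorellTails Y ν)
    (hY : Measurable Y) (hY₂ : Integrable (fun ω => Y ω ^ 2) ν) (hlow : C⁻¹ ≤ ∫ ω, Y ω ^ 2 ∂ν)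
    (hupp : ∫ ω, Y ω ^ 2 ∂ν ≤ C) : absMomentBound C ≤ ∫ ω, |Y ω| ∂ν := by
  have hinterp : C⁻¹ ^ 2 ≤ (∫ ω, |Y ω| ∂ν) * thirdMomentBound C :=
    calc C⁻¹ ^ 2 ≤ (∫ ω, Y ω ^ 2 ∂ν) ^ 2 := by gcongr
      _ ≤ (∫ ω, |Y ω| ∂ν) * ∫ ω, |Y ω| ^ 3 ∂ν :=
          sq_integral_sq_le_integral_abs_mul_integral_abs_cube
            (integrable_of_integrable_sq hY.aestronglyMeasurable hY₂) hY₂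
            (hB.integrable_abs_cube hY hY₂)
      _ ≤ (∫ ω, |Y ω| ∂ν) * thirdMomentBound C := by
          gcongr
          exact hB.integral_abs_cube_le hY hY₂ hupp
  rw [absMomentBound, mul_inv, ← inv_pow, ← div_eq_mul_inv, div_le_iff₀]
  · exact hinterp
  · unfold thirdMomentBound; positivity

theorem abs_add_self_div_two_le (hC : 0 < C) {κ : ℝ} (hκ : 0 < κ) (y : ℝ) :
    (|y| + y) / 2 ≤ κ / 8 + κ / (8 * C) * y ^ 2 + 2 * C / κ * (Ici (κ / 8)).indicator 1 y := by
  by_cases hy : κ / 8 ≤ y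
  · have hamgm : 0 ≤ κ / (8 * C) * (y - 4 * C / κ) ^ 2 := by positivity
    have hexpand : κ / (8 * C) * (y - 4 * C / κ) ^ 2 =
        κ / (8 * C) * y ^ 2 - y + 2 * C / κ := by field_simp; ring
    rw [indicator_of_mem (mem_Ici.2 hy), Pi.one_apply, abs_of_nonneg (by linarith)]
    linarith
  · have hsq : 0 ≤ κ / (8 * C) * y ^ 2 := by positivity
    rw [indicator_of_notMem (notMem_Ici.2 (not_le.1 hy))]
    rcases abs_cases y with h | h <;> linarith

theorem sq_div_le_measureReal_le (hC : 0 < C) {κ : ℝ} (hκ : 0 < κ) (hY : Measurable Y)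
    (hY₂ : Integrable (fun ω => Y ω ^ 2) ν) (hupp : ∫ ω, Y ω ^ 2 ∂ν ≤ C)
    (hcentered : ∫ ω, Y ω ∂ν = 0) (hκY : κ ≤ ∫ ω, |Y ω| ∂ν) :
    κ ^ 2 / (8 * C) ≤ ν.real {ω | κ / 8 ≤ Y ω} := by
  have hY₁ := integrable_of_integrable_sq hY.aestronglyMeasurable hY₂
  have hA : MeasurableSet {ω | κ / 8 ≤ Y ω} := measurableSet_le measurable_const hY
  have hind : Integrable ({ω | κ / 8 ≤ Y ω}.indicator (1 : Ω → ℝ)) ν :=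
    (integrable_const 1).indicator hA
  have hquad : Integrable (fun ω => κ / 8 + κ / (8 * C) * Y ω ^ 2) ν :=
    (integrable_const _).add (hY₂.const_mul _)
  have hintegral : κ / 2 ≤ κ / 8 + κ / (8 * C) * ∫ ω, Y ω ^ 2 ∂ν +
      2 * C / κ * ν.real {ω | κ / 8 ≤ Y ω} :=
    calc κ / 2 ≤ ∫ ω, (|Y ω| + Y ω) / 2 ∂ν := by
          rw [integral_div, integral_add hY₁.abs hY₁, hcentered]; linarith
      _ ≤ ∫ ω, (κ / 8 + κ / (8 * C) * Y ω ^ 2 + 2 * C / κ * {ω | κ / 8 ≤ Y ω}.indicator 1 ω) ∂ν :=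
          integral_mono ((hY₁.abs.add hY₁).div_const 2) (hquad.add (hind.const_mul _))
            fun ω => abs_add_self_div_two_le hC hκ (Y ω)
      _ = _ := by
          rw [integral_add hquad (hind.const_mul _), integral_add (integrable_const _)
            (hY₂.const_mul _), integral_const_mul, integral_const_mul, integral_indicator_one hA,
            integral_const, probReal_univ, one_smul]
  have hvar : κ / (8 * C) * ∫ ω, Y ω ^ 2 ∂ν ≤ κ / 8 :=
    calc κ / (8 * C) * ∫ ω, Y ω ^ 2 ∂ν ≤ κ / (8 * C) * C := by gcongr
      _ = κ / 8 := by field_simp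
  have hmass : κ / 4 ≤ 2 * C / κ * ν.real {ω | κ / 8 ≤ Y ω} := by linarith
  calc κ ^ 2 / (8 * C) = κ / (2 * C) * (κ / 4) := by field_simp; ring
    _ ≤ κ / (2 * C) * (2 * C / κ * ν.real {ω | κ / 8 ≤ Y ω}) := by gcongr
    _ = ν.real {ω | κ / 8 ≤ Y ω} := by field_simp

end RandomVariable

end BorellTails

section NormalizedLaw

open Set
open scoped ENNReal RealInnerProductSpace

variable {E : Type*} [NormedAddCommGroup E] [InnerProductSpace ℝ E] [FiniteDimensional ℝ E]
  [MeasurableSpace E] [BorelSpace E] {P : Measure E} {C : ℝ}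

/-- The class of laws in the theorem, recentered: log-concave probability laws with mean zero whose
covariance has all its eigenvalues in `[C⁻¹, C]`. Mean and covariance are expressed through the
one-dimensional marginals; since `0 < C⁻¹`, the squares of these are automatically integrable. -/
structure IsNormalizedLogConcave (C : ℝ) (P : Measure E) : Prop where
  isProbabilityMeasure : IsProbabilityMeasure P
  hasLogConcaveDensity : HasLogConcaveDensity P
  integral_inner : ∀ a : E, ∫ x, ⟪a, x⟫ ∂P = 0
  le_integral_inner_sq : ∀ a : E, ‖a‖ = 1 → C⁻¹ ≤ ∫ x, ⟪a, x⟫ ^ 2 ∂P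
  integral_inner_sq_le : ∀ a : E, ‖a‖ = 1 → ∫ x, ⟪a, x⟫ ^ 2 ∂P ≤ C

namespace IsNormalizedLogConcave

theorem integrable_inner_sq (hP : IsNormalizedLogConcave C P) (hC : 0 < C) {a : E}
    (ha : ‖a‖ = 1) : Integrable (fun x => ⟪a, x⟫ ^ 2) P := by
  by_contra hint
  have hlow := hP.le_integral_inner_sq a ha
  rw [integral_undef hint] at hlow
  exact (inv_pos.2 hC).not_ge hlow

theorem hasBorellTails_inner (hP : IsNormalizedLogConcave C P) (a : E) :
    HasBorellTails (fun x => ⟪a, x⟫) P :=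
  have := hP.isProbabilityMeasure
  hP.hasLogConcaveDensity.hasBorellTails isPrekopaLeindler_volume (innerₗ E a)
    (measurable_const.inner measurable_id)

theorem absMomentBound_le_integral_abs_inner (hP : IsNormalizedLogConcave C P) (hC : 0 < C)
    {a : E} (ha : ‖a‖ = 1) : absMomentBound C ≤ ∫ x, |⟪a, x⟫| ∂P :=
  have := hP.isProbabilityMeasure
  (hP.hasBorellTails_inner a).absMomentBound_le_integral_abs hC
    (measurable_const.inner measurable_id) (hP.integrable_inner_sq hC ha)
    (hP.le_integral_inner_sq a ha) (hP.integral_inner_sq_le a ha)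

theorem sq_div_le_measureReal_halfSpace (hP : IsNormalizedLogConcave C P) (hC : 0 < C) {a : E}
    (ha : ‖a‖ = 1) :
    absMomentBound C ^ 2 / (8 * C) ≤ P.real {x | absMomentBound C / 8 ≤ ⟪a, x⟫} :=
  have := hP.isProbabilityMeasure
  sq_div_le_measureReal_le hC (absMomentBound_pos hC) (measurable_const.inner measurable_id)
    (hP.integrable_inner_sq hC ha) (hP.integral_inner_sq_le a ha) (hP.integral_inner a)
    (hP.absMomentBound_le_integral_abs_inner hC ha)

theorem lintegral_norm_sq_le (hP : IsNormalizedLogConcave C P) (hC : 0 < C) :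
    ∫⁻ x, ENNReal.ofReal (‖x‖ ^ 2) ∂P ≤ ENNReal.ofReal (Module.finrank ℝ E * C) := by
  let b := stdOrthonormalBasis ℝ E
  have hint : ∀ i, Integrable (fun x => ⟪b i, x⟫ ^ 2) P := fun i =>
    hP.integrable_inner_sq hC (b.orthonormal.1 i)
  have hsq : ∀ x, ‖x‖ ^ 2 = ∑ i, ⟪b i, x⟫ ^ 2 := fun x => by
    simpa only [Real.norm_eq_abs, sq_abs] using (b.sum_sq_norm_inner_right x).symm
  simp only [hsq]
  rw [← ofReal_integral_eq_lintegral_ofReal (integrable_finsetSum _ fun i _ => hint i)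
    (.of_forall fun x => by positivity), integral_finsetSum _ fun i _ => hint i]
  refine ENNReal.ofReal_le_ofReal ?_
  calc ∑ i, ∫ x, ⟪b i, x⟫ ^ 2 ∂P ≤ ∑ _i : Fin (Module.finrank ℝ E), C :=
        Finset.sum_le_sum fun i _ => hP.integral_inner_sq_le _ (b.orthonormal.1 i)
    _ = Module.finrank ℝ E * C := by simp

theorem map_adjoint {F : Type*} [NormedAddCommGroup F] [InnerProductSpace ℝ F]
    [FiniteDimensional ℝ F] [MeasurableSpace F] [BorelSpace F] (hP : IsNormalizedLogConcave C P)
    (ι : F →ₗᵢ[ℝ] E) : IsNormalizedLogConcave C (P.map ι.toContinuousLinearMap.adjoint) := by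
  have := hP.isProbabilityMeasure
  have hmeas : Measurable ι.toContinuousLinearMap.adjoint :=
    ι.toContinuousLinearMap.adjoint.continuous.measurable
  have hintegral : ∀ (a : F) (g : ℝ → ℝ), Continuous g →
      ∫ y, g ⟪a, y⟫ ∂P.map ι.toContinuousLinearMap.adjoint = ∫ x, g ⟪ι a, x⟫ ∂P := by
    intro a g hg
    rw [integral_map hmeas.aemeasurable (by fun_prop)]
    simp only [ContinuousLinearMap.adjoint_inner_right, LinearIsometry.coe_toContinuousLinearMap]
  exact {
    isProbabilityMeasure := Measure.isProbabilityMeasure_map hmeas.aemeasurable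
    hasLogConcaveDensity := hP.hasLogConcaveDensity.map_adjoint ι
    integral_inner := fun a => (hintegral a id continuous_id).trans (hP.integral_inner (ι a))
    le_integral_inner_sq := fun a ha => (hP.le_integral_inner_sq (ι a)
      (by rw [ι.norm_map, ha])).trans_eq (hintegral a (· ^ 2) (continuous_pow 2)).symm
    integral_inner_sq_le := fun a ha => (hintegral a (· ^ 2) (continuous_pow 2)).trans_le
      (hP.integral_inner_sq_le (ι a) (by rw [ι.norm_map, ha])) }

end IsNormalizedLogConcave

end NormalizedLaw

section DensityBounds

open Set Metric
open scoped ENNReal RealInnerProductSpace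

theorem measure_inter_superlevel_ne_zero {α : Type*} [MeasurableSpace α] {μ : Measure α}
    {f : α → ℝ≥0∞} {H B : Set α} (hH : MeasurableSet H) (hB : MeasurableSet B) {m : ℝ≥0∞}
    (hmass : m * μ B + μ.withDensity f Bᶜ < μ.withDensity f H) :
    μ (H ∩ {x | m < f x}) ≠ 0 := by
  intro hnull
  have hle : ∀ᵐ x ∂μ, x ∈ H ∩ B → f x ≤ m := by
    filter_upwards [measure_eq_zero_iff_ae_notMem.1 hnull] with x hx hxHB
    exact not_lt.1 fun h => hx ⟨hxHB.1, h⟩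
  refine hmass.not_ge ?_
  calc μ.withDensity f H ≤ μ.withDensity f (H ∩ B) + μ.withDensity f Bᶜ :=
        (measure_mono (fun x hx => (em (x ∈ B)).imp (⟨hx, ·⟩) id)).trans (measure_union_le _ _)
    _ ≤ m * μ B + μ.withDensity f Bᶜ := by
        gcongr
        rw [withDensity_apply _ (hH.inter hB)]
        calc ∫⁻ x in H ∩ B, f x ∂μ ≤ ∫⁻ _ in H ∩ B, m ∂μ :=
              setLIntegral_mono_ae' (hH.inter hB) hle
          _ ≤ m * μ B := by
              rw [setLIntegral_const]
              gcongr
              exact inter_subset_right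

theorem ball_subset_of_forall_exists_le_inner {E : Type*} [NormedAddCommGroup E]
    [InnerProductSpace ℝ E] [CompleteSpace E] [Nontrivial E] {K : Set E} (hK : Convex ℝ K)
    (hKo : IsOpen K) {r : ℝ} (hr : ∀ a : E, ‖a‖ = 1 → ∃ z ∈ K, r ≤ ⟪a, z⟫) : ball 0 r ⊆ K := by
  intro x hx
  by_contra hxK
  obtain ⟨φ, hφ⟩ := geometric_hahn_banach_open_point hK hKo hxK
  obtain ⟨e, he⟩ := exists_norm_eq E zero_le_one
  obtain ⟨z₀, hz₀, -⟩ := hr e he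
  have hφ₀ : φ ≠ 0 := by
    rintro rfl
    exact lt_irrefl _ (hφ z₀ hz₀)
  set a := (InnerProductSpace.toDual ℝ E).symm φ
  have ha₀ : 0 < ‖a‖ := norm_pos_iff.2 ((map_ne_zero_iff _ (LinearIsometryEquiv.injective _)).2 hφ₀)
  obtain ⟨z, hz, hrz⟩ := hr (‖a‖⁻¹ • a) (norm_smul_inv_norm (norm_pos_iff.1 ha₀))
  rw [real_inner_smul_left, InnerProductSpace.toDual_symm_apply, ← div_eq_inv_mul,
    le_div_iff₀ ha₀] at hrz
  have hφx : φ x ≤ ‖a‖ * ‖x‖ := by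
    rw [← InnerProductSpace.toDual_symm_apply]
    exact real_inner_le_norm _ _
  have hxr : ‖a‖ * ‖x‖ < ‖a‖ * r := by
    gcongr
    exact mem_ball_zero_iff.1 hx
  linarith [hφ z hz]

section AddHaar

variable {E : Type*} [NormedAddCommGroup E] [NormedSpace ℝ E] [MeasurableSpace E] [BorelSpace E]
  {μ : Measure E} [μ.IsAddHaarMeasure]

theorem inter_interior_nonempty_of_measure_ne_zero [FiniteDimensional ℝ E] {H K : Set E}
    (hK : Convex ℝ K) (hHK : μ (H ∩ K) ≠ 0) : (H ∩ interior K).Nonempty := by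
  rw [nonempty_iff_ne_empty]
  intro hempty
  refine hHK (measure_mono_null (fun x hx => ?_) (hK.addHaar_frontier μ))
  exact ⟨subset_closure hx.2, fun hxK => (hempty ▸ ⟨hx.1, hxK⟩ : x ∈ (∅ : Set E))⟩

theorem LogConcave.rpow_half_mul_measure_ball_le {f : E → ℝ≥0∞} (hf : LogConcave f) {m : ℝ≥0∞}
    {ρ : ℝ} (hm : ∀ z ∈ ball (0 : E) ρ, m ≤ f z) (x : E) :
    f x ^ (1 / 2 : ℝ) * m ^ (1 / 2 : ℝ) * μ (ball 0 (ρ / 2)) ≤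
      μ.withDensity f (ball ((1 / 2 : ℝ) • x) (ρ / 2)) := by
  rw [← Measure.addHaar_ball_center μ ((1 / 2 : ℝ) • x), ← setLIntegral_const,
    withDensity_apply _ measurableSet_ball]
  refine setLIntegral_mono' measurableSet_ball fun w hw => ?_
  have hreflect : (2 : ℝ) • w - x ∈ ball (0 : E) ρ := by
    have hscale : (2 : ℝ) • w - x = (2 : ℝ) • (w - (1 / 2 : ℝ) • x) := by module
    rw [mem_ball, dist_eq_norm] at hw
    rw [mem_ball_zero_iff, hscale, norm_smul, Real.norm_two]
    linarith
  calc f x ^ (1 / 2 : ℝ) * m ^ (1 / 2 : ℝ)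
      ≤ f x ^ (1 / 2 : ℝ) * f ((2 : ℝ) • w - x) ^ (1 / 2 : ℝ) := by
        gcongr
        exact hm _ hreflect
    _ ≤ f ((1 / 2 : ℝ) • x + (1 / 2 : ℝ) • ((2 : ℝ) • w - x)) :=
        hf one_half_pos one_half_pos (add_halves 1)
    _ = f w := by
        congr 1
        module

end AddHaar

theorem ofReal_one_add_norm_sq_mul_measure_ball_le {E : Type*} [NormedAddCommGroup E]
    [NormedSpace ℝ E] [MeasurableSpace E] [BorelSpace E] {P : Measure E} [IsProbabilityMeasure P]
    {V : ℝ} (hV : 0 ≤ V) (hP : ∫⁻ x, ENNReal.ofReal (‖x‖ ^ 2) ∂P ≤ ENNReal.ofReal V) (ρ : ℝ)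
    (x : E) :
    ENNReal.ofReal (1 + ‖x‖ ^ 2) * P (ball ((1 / 2 : ℝ) • x) (ρ / 2)) ≤
      ENNReal.ofReal (1 + 2 * ρ ^ 2 + 8 * V) := by
  have hball : ∀ w ∈ ball ((1 / 2 : ℝ) • x) (ρ / 2),
      ENNReal.ofReal (1 + ‖x‖ ^ 2) ≤ ENNReal.ofReal (1 + 2 * ρ ^ 2) +
        8 * ENNReal.ofReal (‖w‖ ^ 2) := by
    intro w hw
    have hnorm : ‖x‖ ≤ 2 * ‖w‖ + ρ := by
      have hsplit : x = (2 : ℝ) • w - (2 : ℝ) • (w - (1 / 2 : ℝ) • x) := by module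
      have hdist : ‖w - (1 / 2 : ℝ) • x‖ < ρ / 2 := by rwa [mem_ball, dist_eq_norm] at hw
      have htri := norm_sub_le ((2 : ℝ) • w) ((2 : ℝ) • (w - (1 / 2 : ℝ) • x))
      rw [← hsplit, norm_smul, norm_smul, Real.norm_two] at htri
      linarith
    calc ENNReal.ofReal (1 + ‖x‖ ^ 2)
        ≤ ENNReal.ofReal (1 + 2 * ρ ^ 2 + 8 * ‖w‖ ^ 2) := by
          refine ENNReal.ofReal_le_ofReal ?_
          nlinarith [norm_nonneg x, sq_nonneg (2 * ‖w‖ - ρ)]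
      _ = ENNReal.ofReal (1 + 2 * ρ ^ 2) + 8 * ENNReal.ofReal (‖w‖ ^ 2) := by
          rw [ENNReal.ofReal_add (by positivity) (by positivity), ENNReal.ofReal_mul (by norm_num)]
          simp only [ENNReal.ofReal_ofNat]
  calc ENNReal.ofReal (1 + ‖x‖ ^ 2) * P (ball ((1 / 2 : ℝ) • x) (ρ / 2))
      = ∫⁻ w in ball ((1 / 2 : ℝ) • x) (ρ / 2), ENNReal.ofReal (1 + ‖x‖ ^ 2) ∂P := by
        rw [setLIntegral_const]
    _ ≤ ∫⁻ w, ENNReal.ofReal (1 + 2 * ρ ^ 2) + 8 * ENNReal.ofReal (‖w‖ ^ 2) ∂P :=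
        (setLIntegral_mono' measurableSet_ball hball).trans (setLIntegral_le_lintegral _ _)
    _ = ENNReal.ofReal (1 + 2 * ρ ^ 2) + 8 * ∫⁻ w, ENNReal.ofReal (‖w‖ ^ 2) ∂P := by
        rw [lintegral_add_left measurable_const, lintegral_const, measure_univ, mul_one,
          lintegral_const_mul' _ _ (by simp)]
    _ ≤ ENNReal.ofReal (1 + 2 * ρ ^ 2) + 8 * ENNReal.ofReal V := by gcongr
    _ = ENNReal.ofReal (1 + 2 * ρ ^ 2 + 8 * V) := by
        rw [ENNReal.ofReal_add (p := 1 + 2 * ρ ^ 2) (by positivity) (by positivity),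
          ENNReal.ofReal_mul (by norm_num)]
        simp only [ENNReal.ofReal_ofNat]

theorem LogConcave.le_ofReal_div_one_add_norm_sq {E : Type*} [NormedAddCommGroup E]
    [NormedSpace ℝ E] [MeasurableSpace E] [BorelSpace E] {μ : Measure E} [μ.IsAddHaarMeasure]
    {f : E → ℝ≥0∞} (hf : LogConcave f) [IsProbabilityMeasure (μ.withDensity f)] {V : ℝ}
    (hV : 0 ≤ V)
    (hsq : ∫⁻ x, ENNReal.ofReal (‖x‖ ^ 2) ∂μ.withDensity f ≤ ENNReal.ofReal V) {m ρ v : ℝ}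
    (hm₀ : 0 < m) (hm : ∀ z ∈ ball (0 : E) ρ, ENNReal.ofReal m ≤ f z) (hv₀ : 0 < v)
    (hv : ENNReal.ofReal v ≤ μ (ball (0 : E) (ρ / 2))) (x : E) :
    f x ≤ ENNReal.ofReal ((1 + 2 * ρ ^ 2 + 8 * V) ^ 2 / (m * v ^ 2) / (1 + ‖x‖ ^ 2) ^ 2) := by
  have hsqrt : f x ^ (1 / 2 : ℝ) * (ENNReal.ofReal m ^ (1 / 2 : ℝ) * ENNReal.ofReal v *
      ENNReal.ofReal (1 + ‖x‖ ^ 2)) ≤ ENNReal.ofReal (1 + 2 * ρ ^ 2 + 8 * V) :=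
    calc f x ^ (1 / 2 : ℝ) * (ENNReal.ofReal m ^ (1 / 2 : ℝ) * ENNReal.ofReal v *
          ENNReal.ofReal (1 + ‖x‖ ^ 2))
        = ENNReal.ofReal (1 + ‖x‖ ^ 2) *
            (f x ^ (1 / 2 : ℝ) * ENNReal.ofReal m ^ (1 / 2 : ℝ) * ENNReal.ofReal v) := by ring
      _ ≤ ENNReal.ofReal (1 + ‖x‖ ^ 2) *
            μ.withDensity f (ball ((1 / 2 : ℝ) • x) (ρ / 2)) := by
          gcongr
          exact (by gcongr : _ ≤ _).trans (hf.rpow_half_mul_measure_ball_le hm x)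
      _ ≤ ENNReal.ofReal (1 + 2 * ρ ^ 2 + 8 * V) :=
          ofReal_one_add_norm_sq_mul_measure_ball_le hV hsq ρ x
  have hsquare : ∀ a : ℝ≥0∞, (a ^ (1 / 2 : ℝ)) ^ 2 = a := fun a => by
    rw [← ENNReal.rpow_natCast, ← ENNReal.rpow_mul]
    norm_num
  have hprod := pow_le_pow_left' hsqrt 2
  rw [mul_pow, mul_pow, mul_pow, hsquare, hsquare, ← ENNReal.ofReal_pow hv₀.le,
    ← ENNReal.ofReal_pow (by positivity), ← ENNReal.ofReal_pow (by positivity),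
    ← ENNReal.ofReal_mul hm₀.le, ← ENNReal.ofReal_mul (by positivity),
    ← ENNReal.le_div_iff_mul_le (.inl (ENNReal.ofReal_pos.2 (by positivity)).ne')
      (.inl ENNReal.ofReal_ne_top), ← ENNReal.ofReal_div_of_pos (by positivity), ← div_div] at hprod
  exact hprod

theorem measure_compl_ball_le {E : Type*} [NormedAddCommGroup E] [MeasurableSpace E]
    [BorelSpace E] {P : Measure E} {V : ℝ}
    (hP : ∫⁻ x, ENNReal.ofReal (‖x‖ ^ 2) ∂P ≤ ENNReal.ofReal V) {R : ℝ} (hR : 0 < R) :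
    P (ball 0 R)ᶜ ≤ ENNReal.ofReal (V / R ^ 2) := by
  have hsub : (ball (0 : E) R)ᶜ ⊆ {x | ENNReal.ofReal (R ^ 2) ≤ ENNReal.ofReal (‖x‖ ^ 2)} := by
    intro x hx
    rw [mem_compl_iff, mem_ball_zero_iff, not_lt] at hx
    exact ENNReal.ofReal_le_ofReal (by gcongr)
  rw [ENNReal.ofReal_div_of_pos (by positivity)]
  calc P (ball 0 R)ᶜ ≤ (∫⁻ x, ENNReal.ofReal (‖x‖ ^ 2) ∂P) / ENNReal.ofReal (R ^ 2) :=
        (measure_mono hsub).trans (meas_ge_le_lintegral_div (by fun_prop)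
          (ENNReal.ofReal_pos.2 (by positivity)).ne' ENNReal.ofReal_ne_top)
    _ ≤ ENNReal.ofReal V / ENNReal.ofReal (R ^ 2) := by gcongr

theorem exists_mul_measure_ball_add_measure_compl_ball_lt {E : Type*} [NormedAddCommGroup E]
    [ProperSpace E] [MeasurableSpace E] [BorelSpace E] (μ : Measure E)
    [IsFiniteMeasureOnCompacts μ] {V c : ℝ} (hV : 0 < V) (hc : 0 < c) :
    ∃ m : ℝ, 0 < m ∧ ∃ R : ℝ, ∀ P : Measure E,
      ∫⁻ x, ENNReal.ofReal (‖x‖ ^ 2) ∂P ≤ ENNReal.ofReal V →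
        ENNReal.ofReal m * μ (ball 0 R) + P (ball 0 R)ᶜ < ENNReal.ofReal c := by
  set R := √(4 * V / c)
  set v := μ.real (ball (0 : E) R)
  have hv : 0 ≤ v := measureReal_nonneg
  refine ⟨c / (4 * (v + 1)), by positivity, R, fun P hP => ?_⟩
  have htail : P (ball 0 R)ᶜ ≤ ENNReal.ofReal (c / 4) := by
    refine (measure_compl_ball_le hP (by positivity)).trans_eq ?_
    rw [Real.sq_sqrt (by positivity)]
    congr 1
    field_simp
  have hball : ENNReal.ofReal (c / (4 * (v + 1))) * μ (ball 0 R) ≤ ENNReal.ofReal (c / 4) := by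
    rw [← ofReal_measureReal measure_ball_lt_top.ne, ← ENNReal.ofReal_mul (by positivity)]
    refine ENNReal.ofReal_le_ofReal ?_
    rw [div_mul_eq_mul_div, div_le_div_iff₀ (by positivity) (by positivity)]
    nlinarith
  calc _ ≤ ENNReal.ofReal (c / 4) + ENNReal.ofReal (c / 4) := add_le_add hball htail
    _ < ENNReal.ofReal c := by
        rw [← ENNReal.ofReal_add (by positivity) (by positivity), ENNReal.ofReal_lt_ofReal_iff hc]
        linarith

namespace IsNormalizedLogConcave

variable {C : ℝ} (E : Type*) [NormedAddCommGroup E] [InnerProductSpace ℝ E]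
  [FiniteDimensional ℝ E] [MeasurableSpace E] [BorelSpace E]

theorem exists_le_density_of_mem_ball [Nontrivial E] (hC : 0 < C) :
    ∃ m : ℝ, 0 < m ∧ ∀ f : E → ℝ≥0∞, LogConcave f →
      IsNormalizedLogConcave C (volume.withDensity f) →
        ∀ z ∈ ball (0 : E) (absMomentBound C / 8), ENNReal.ofReal m ≤ f z := by
  have hκ := absMomentBound_pos hC
  have hn : 0 < Module.finrank ℝ E := Module.finrank_pos
  obtain ⟨m, hm, R, hR⟩ := exists_mul_measure_ball_add_measure_compl_ball_lt (volume : Measure E)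
    (V := Module.finrank ℝ E * C) (c := absMomentBound C ^ 2 / (8 * C)) (by positivity)
    (by positivity)
  refine ⟨m, hm, fun f hf hP z hz => ?_⟩
  have := hP.isProbabilityMeasure
  have hmass : ∀ a : E, ‖a‖ = 1 →
      ENNReal.ofReal m * volume (ball (0 : E) R) + volume.withDensity f (ball 0 R)ᶜ <
        volume.withDensity f {x | absMomentBound C / 8 ≤ ⟪a, x⟫} := fun a ha => by
    refine (hR _ (hP.lintegral_norm_sq_le hC)).trans_le ?_
    rw [← ofReal_measureReal]
    exact ENNReal.ofReal_le_ofReal (hP.sq_div_le_measureReal_halfSpace hC ha)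
  have hconv := hf.convex_superlevel (c := ENNReal.ofReal m)
  have hsub := ball_subset_of_forall_exists_le_inner hconv.interior isOpen_interior fun a ha => by
    obtain ⟨w, hw, hwint⟩ := inter_interior_nonempty_of_measure_ne_zero hconv
      (measure_inter_superlevel_ne_zero (measurableSet_le measurable_const
        (measurable_const.inner measurable_id)) measurableSet_ball (hmass a ha))
    exact ⟨w, hwint, hw⟩
  exact (interior_subset (hsub hz)).le

theorem exists_density_le_of_le (hC : 0 < C) {m ρ : ℝ} (hm : 0 < m) (hρ : 0 < ρ) :
    ∃ M : ℝ, 0 < M ∧ ∀ f : E → ℝ≥0∞, LogConcave f →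
      IsNormalizedLogConcave C (volume.withDensity f) →
        (∀ z ∈ ball (0 : E) ρ, ENNReal.ofReal m ≤ f z) →
          ∀ x, f x ≤ ENNReal.ofReal (M / (1 + ‖x‖ ^ 2) ^ 2) := by
  set v := volume.real (ball (0 : E) (ρ / 2))
  have hv : 0 < v :=
    ENNReal.toReal_pos (measure_ball_pos volume _ (half_pos hρ)).ne' measure_ball_lt_top.ne
  set V : ℝ := Module.finrank ℝ E * C
  refine ⟨(1 + 2 * ρ ^ 2 + 8 * V) ^ 2 / (m * v ^ 2), by positivity, fun f hf hP hlow x => ?_⟩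
  have := hP.isProbabilityMeasure
  exact hf.le_ofReal_div_one_add_norm_sq (by positivity) (hP.lintegral_norm_sq_le hC) hm hlow hv
    (ofReal_measureReal measure_ball_lt_top.ne).le x

end IsNormalizedLogConcave

end DensityBounds

section PlanarMarginals

open Set Metric
open scoped ENNReal RealInnerProductSpace

theorem exists_linearIsometry_adjoint_apply {E : Type*} [NormedAddCommGroup E]
    [InnerProductSpace ℝ E] [CompleteSpace E] {ι : Type*} [Fintype ι] {v : ι → E}
    (hv : Orthonormal ℝ v) :
    ∃ T : EuclideanSpace ℝ ι →ₗᵢ[ℝ] E, ∀ x i, T.toContinuousLinearMap.adjoint x i = ⟪v i, x⟫ := by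
  classical
  let b := EuclideanSpace.basisFun ι ℝ
  let T := (b.toBasis.constr ℝ v).isometryOfOrthonormal (v := b.toBasis)
    (by simp) (by simpa [Function.comp_def] using hv)
  refine ⟨T, fun x i => ?_⟩
  have hT : T (b i) = v i := by
    rw [← b.coe_toBasis]
    exact b.toBasis.constr_basis ℝ v i
  rw [← hT, ← T.coe_toContinuousLinearMap, ← ContinuousLinearMap.adjoint_inner_right]
  exact (EuclideanSpace.basisFun_inner ι ℝ _ i).symm

theorem exists_planar_density_bounds {C : ℝ} (hC : 0 < C) :
    ∃ m ρ M : ℝ, 0 < m ∧ 0 < ρ ∧ 0 < M ∧ ∀ {E : Type*} [NormedAddCommGroup E]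
      [InnerProductSpace ℝ E] [FiniteDimensional ℝ E] [MeasurableSpace E] [BorelSpace E]
      {P : Measure E}, IsNormalizedLogConcave C P → ∀ {u e : E}, ‖u‖ = 1 → ‖e‖ = 1 → ⟪u, e⟫ = 0 →
        ∃ g : ℝ × ℝ → ℝ≥0∞,
          P.map (fun x => (⟪u, x⟫, ⟪e, x⟫)) = volume.withDensity g ∧
          (∀ z, |z.1| ≤ ρ → |z.2| ≤ ρ → ENNReal.ofReal m ≤ g z) ∧
          ∀ z, g z ≤ ENNReal.ofReal (M / (1 + z.2 ^ 2) ^ 2) := by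
  have hκ := absMomentBound_pos hC
  obtain ⟨m, hm, hlow⟩ :=
    IsNormalizedLogConcave.exists_le_density_of_mem_ball (EuclideanSpace ℝ (Fin 2)) hC
  obtain ⟨M, hM, hup⟩ := IsNormalizedLogConcave.exists_density_le_of_le
    (EuclideanSpace ℝ (Fin 2)) hC hm (by positivity : 0 < absMomentBound C / 8)
  refine ⟨m, absMomentBound C / 16, M, hm, by positivity, hM,
    fun {E} _ _ _ _ _ P hP u e hu he hue => ?_⟩
  obtain ⟨T, hT⟩ := exists_linearIsometry_adjoint_apply (v := ![u, e])
    (by simp [orthonormal_vecCons_iff, hu, he, hue])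
  have hQ := hP.map_adjoint T
  obtain ⟨f, hfm, hf, hPf⟩ := hQ.hasLogConcaveDensity
  rw [hPf] at hQ
  let φ : EuclideanSpace ℝ (Fin 2) → ℝ × ℝ := fun x => (x 0, x 1)
  have hφ : MeasurePreserving φ := (volume_preserving_finTwoArrow ℝ).comp
    (PiLp.volume_preserving_ofLp (Fin 2))
  let ψ : ℝ × ℝ → EuclideanSpace ℝ (Fin 2) := fun z => !₂[z.1, z.2]
  have hψ : Measurable ψ := by fun_prop
  have hnorm : ∀ z, ‖ψ z‖ ^ 2 = z.1 ^ 2 + z.2 ^ 2 := fun z => by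
    simp [ψ, EuclideanSpace.norm_sq_eq]
  refine ⟨f ∘ ψ, ?_, fun z hz₁ hz₂ => ?_, fun z => ?_⟩
  · have hψφ : (f ∘ ψ) ∘ φ = f := funext fun x => congrArg f (by ext i; fin_cases i <;> rfl)
    rw [← map_withDensity_comp hφ (hfm.comp hψ), hψφ, ← hPf,
      Measure.map_map hφ.measurable (by fun_prop)]
    congr 1
    ext x <;> simp [φ, hT]
  · refine hlow f hf hQ _ (mem_ball_zero_iff.2 (lt_of_pow_lt_pow_left₀ 2 (by positivity) ?_))
    rw [hnorm, ← sq_abs z.1, ← sq_abs z.2]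
    nlinarith [abs_nonneg z.1, abs_nonneg z.2]
  · refine (hup f hf hQ (hlow f hf hQ) _).trans (ENNReal.ofReal_le_ofReal ?_)
    rw [hnorm]
    gcongr
    exact le_add_of_nonneg_left (sq_nonneg _)

end PlanarMarginals

section SignLoss

open Set
open scoped ENNReal RealInnerProductSpace

/-- The cost `|a| 1(sgn a ≠ sgn b)` of predicting the sign of `a` by that of `b`; the theorem bounds
its expectation for `a = ⟪u, X⟫` and `b = ⟪v, X⟫`. -/
def signLoss (a b : ℝ) : ℝ := |a| * if Real.sign a = Real.sign b then 0 else 1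

theorem signLoss_nonneg (a b : ℝ) : 0 ≤ signLoss a b := by
  unfold signLoss
  positivity

theorem signLoss_le_abs (a b : ℝ) : signLoss a b ≤ |a| := by
  unfold signLoss
  split_ifs <;> simp

theorem signLoss_self (a : ℝ) : signLoss a a = 0 := by
  simp [signLoss]

theorem signLoss_neg_right_self (a : ℝ) : signLoss a (-a) = |a| := by
  unfold signLoss
  split_ifs with h
  · have hsign : Real.sign a = 0 := by linarith [Real.sign_neg (r := a)]
    simp [Real.sign_eq_zero_iff.1 hsign]
  · exact mul_one _

theorem measurable_sign : Measurable Real.sign :=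
  .ite measurableSet_Iio measurable_const (.ite measurableSet_Ioi measurable_const measurable_const)

theorem measurable_signLoss {α : Type*} [MeasurableSpace α] {f g : α → ℝ} (hf : Measurable f)
    (hg : Measurable g) : Measurable fun x => signLoss (f x) (g x) :=
  hf.abs.mul (.ite (measurableSet_eq_fun (measurable_sign.comp hf) (measurable_sign.comp hg))
    measurable_const measurable_const)

theorem signLoss_of_pos_of_nonpos {a b : ℝ} (ha : 0 < a) (hb : b ≤ 0) : signLoss a b = a := by
  have hne : Real.sign a ≠ Real.sign b := by
    rw [Real.sign_of_pos ha]
    rcases hb.lt_or_eq with hb | rfl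
    · rw [Real.sign_of_neg hb]
      norm_num
    · rw [Real.sign_zero]
      exact one_ne_zero
  rw [signLoss, if_neg hne, mul_one, abs_of_pos ha]

theorem mul_abs_le_of_sign_ne {t a z : ℝ}
    (hsign : Real.sign a ≠ Real.sign (t * a + z)) : t * |a| ≤ |z| := by
  rcases lt_trichotomy a 0 with ha | rfl | ha
  · have hz : 0 ≤ t * a + z := not_lt.1 fun h => hsign <| by
      rw [Real.sign_of_neg ha, Real.sign_of_neg h]
    rw [abs_of_neg ha]
    linarith [le_abs_self z]
  · simp
  · have hz : t * a + z ≤ 0 := not_lt.1 fun h => hsign <| by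
      rw [Real.sign_of_pos ha, Real.sign_of_pos h]
    rw [abs_of_pos ha]
    linarith [neg_abs_le z]

theorem ofReal_signLoss_le_indicator {t : ℝ} (ht : 1 / 2 ≤ t) (a z : ℝ) :
    ENNReal.ofReal (signLoss a (t * a + z)) ≤
      (Icc (-(2 * |z|)) (2 * |z|)).indicator (fun _ => ENNReal.ofReal (2 * |z|)) a := by
  by_cases hsign : Real.sign a = Real.sign (t * a + z)
  · simp [signLoss, hsign]
  · have ha : |a| ≤ 2 * |z| := by
      nlinarith [mul_abs_le_of_sign_ne hsign, abs_nonneg a]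
    rw [indicator_of_mem (mem_Icc.2 (abs_le.1 ha))]
    exact ENNReal.ofReal_le_ofReal ((signLoss_le_abs _ _).trans ha)

theorem lintegral_signLoss_add_le {t : ℝ} (ht : 1 / 2 ≤ t) (α z : ℝ) :
    ∫⁻ s, ENNReal.ofReal (signLoss (s + α) (t * (s + α) + z)) ≤ ENNReal.ofReal (8 * z ^ 2) :=
  calc ∫⁻ s, ENNReal.ofReal (signLoss (s + α) (t * (s + α) + z))
      = ∫⁻ a, ENNReal.ofReal (signLoss a (t * a + z)) :=
        lintegral_add_right_eq_self (fun a => ENNReal.ofReal (signLoss a (t * a + z))) α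
    _ ≤ ∫⁻ a, (Icc (-(2 * |z|)) (2 * |z|)).indicator (fun _ => ENNReal.ofReal (2 * |z|)) a :=
        lintegral_mono fun a => ofReal_signLoss_le_indicator ht a z
    _ = ENNReal.ofReal (8 * z ^ 2) := by
        rw [lintegral_indicator measurableSet_Icc, setLIntegral_const, Real.volume_Icc,
          ← ENNReal.ofReal_mul (by positivity), ← sq_abs z]
        congr 1
        ring

theorem lintegral_ofReal_const_mul_inv_one_add_sq {c : ℝ} (hc : 0 ≤ c) :
    ∫⁻ s : ℝ, ENNReal.ofReal (c * (1 + s ^ 2)⁻¹) = ENNReal.ofReal (c * Real.pi) := by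
  rw [← ofReal_integral_eq_lintegral_ofReal (integrable_inv_one_add_sq.const_mul _)
    (.of_forall fun s => by positivity), integral_const_mul, integral_univ_inv_one_add_sq]

theorem lintegral_signLoss_withDensity_le {g : ℝ × ℝ → ℝ≥0∞} {M : ℝ} (hM : 0 ≤ M)
    (hg : ∀ z, g z ≤ ENNReal.ofReal (M / (1 + z.2 ^ 2) ^ 2)) {t : ℝ} (ht : 1 / 2 ≤ t)
    (σ α : ℝ) {β C : ℝ} (hβ : |β| ≤ C) :
    ∫⁻ z, ENNReal.ofReal (signLoss (z.1 + α) (t * (z.1 + α) + σ * (z.2 + β)))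
      ∂volume.withDensity g ≤ ENNReal.ofReal (16 * M * (1 + C ^ 2) * σ ^ 2 * Real.pi) := by
  have hmeas : Measurable fun z : ℝ × ℝ =>
      ENNReal.ofReal (signLoss (z.1 + α) (t * (z.1 + α) + σ * (z.2 + β))) :=
    (measurable_signLoss (by fun_prop) (by fun_prop)).ennreal_ofReal
  have hdens : Measurable fun z : ℝ × ℝ => ENNReal.ofReal (M / (1 + z.2 ^ 2) ^ 2) := by fun_prop
  have hslice : ∀ s : ℝ, 8 * (σ * (s + β)) ^ 2 * (M / (1 + s ^ 2) ^ 2) ≤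
      16 * M * (1 + C ^ 2) * σ ^ 2 * (1 + s ^ 2)⁻¹ := fun s => by
    have hβ' : β ^ 2 ≤ C ^ 2 := sq_le_sq.2 (hβ.trans (le_abs_self C))
    have hsq : (s + β) ^ 2 ≤ 2 * (1 + C ^ 2) * (1 + s ^ 2) := by
      nlinarith [sq_nonneg (s - β), mul_nonneg (sq_nonneg s) (sq_nonneg C)]
    calc 8 * (σ * (s + β)) ^ 2 * (M / (1 + s ^ 2) ^ 2)
        = 8 * σ ^ 2 * (s + β) ^ 2 * (M / (1 + s ^ 2) ^ 2) := by ring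
      _ ≤ 8 * σ ^ 2 * (2 * (1 + C ^ 2) * (1 + s ^ 2)) * (M / (1 + s ^ 2) ^ 2) := by gcongr
      _ = 16 * M * (1 + C ^ 2) * σ ^ 2 * (1 + s ^ 2)⁻¹ := by
          field_simp
          ring
  calc ∫⁻ z, ENNReal.ofReal (signLoss (z.1 + α) (t * (z.1 + α) + σ * (z.2 + β)))
        ∂volume.withDensity g
      ≤ ∫⁻ z, ENNReal.ofReal (signLoss (z.1 + α) (t * (z.1 + α) + σ * (z.2 + β)))
          ∂volume.withDensity fun z : ℝ × ℝ => ENNReal.ofReal (M / (1 + z.2 ^ 2) ^ 2) :=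
        lintegral_mono' (withDensity_mono (.of_forall hg)) le_rfl
    _ = ∫⁻ s : ℝ, ENNReal.ofReal (M / (1 + s ^ 2) ^ 2) *
          ∫⁻ r, ENNReal.ofReal (signLoss (r + α) (t * (r + α) + σ * (s + β))) := by
        rw [lintegral_withDensity_eq_lintegral_mul _ hdens hmeas, Measure.volume_eq_prod,
          lintegral_prod_symm _ (hdens.mul hmeas).aemeasurable]
        simp only [Pi.mul_apply, lintegral_const_mul' _ _ ENNReal.ofReal_ne_top]
    _ ≤ ∫⁻ s : ℝ, ENNReal.ofReal (16 * M * (1 + C ^ 2) * σ ^ 2 * (1 + s ^ 2)⁻¹) := by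
        refine lintegral_mono fun s => ?_
        grw [lintegral_signLoss_add_le ht α (σ * (s + β))]
        rw [mul_comm, ← ENNReal.ofReal_mul (by positivity)]
        exact ENNReal.ofReal_le_ofReal (hslice s)
    _ = ENNReal.ofReal (16 * M * (1 + C ^ 2) * σ ^ 2 * Real.pi) :=
        lintegral_ofReal_const_mul_inv_one_add_sq (by positivity)

theorem le_lintegral_signLoss_withDensity {g : ℝ × ℝ → ℝ≥0∞} {m ρ : ℝ} (hρ : 0 < ρ)
    (hg : ∀ z, |z.1| ≤ ρ → |z.2| ≤ ρ → ENNReal.ofReal m ≤ g z) {t σ η : ℝ} (hη₀ : 0 < η)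
    (hη₁ : η ≤ 1) (hσ : 0 ≤ σ) (hηt : t * η ≤ σ) :
    ENNReal.ofReal (m * ρ ^ 3 / 32 * η ^ 2) ≤
      ∫⁻ z, ENNReal.ofReal (signLoss z.1 (t * z.1 + σ * z.2)) ∂volume.withDensity g := by
  set S : Set (ℝ × ℝ) := Icc (ρ * η / 4) (ρ * η / 2) ×ˢ Icc (-ρ) (-(ρ / 2))
  have hS : MeasurableSet S := measurableSet_Icc.prod measurableSet_Icc
  have hloss : ∀ z ∈ S, ρ * η / 4 ≤ signLoss z.1 (t * z.1 + σ * z.2) := by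
    rintro ⟨a, b⟩ ⟨⟨ha₁, ha₂⟩, -, hb⟩
    dsimp only at ha₁ ha₂ hb ⊢
    have hpos : 0 < a := (by positivity : 0 < ρ * η / 4).trans_le ha₁
    have hta : t * a ≤ σ * (ρ / 2) := by
      rcases le_total t 0 with ht | ht
      · exact (mul_nonpos_of_nonpos_of_nonneg ht hpos.le).trans (by positivity)
      · nlinarith
    rw [signLoss_of_pos_of_nonpos hpos (by nlinarith)]
    exact ha₁
  have hmass : ENNReal.ofReal (m * (ρ ^ 2 * η / 8)) ≤ volume.withDensity g S := by
    have hvol : volume S = ENNReal.ofReal (ρ ^ 2 * η / 8) := by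
      rw [Measure.volume_eq_prod, Measure.prod_prod, Real.volume_Icc, Real.volume_Icc,
        ← ENNReal.ofReal_mul (by nlinarith [mul_pos hρ hη₀])]
      congr 1
      ring
    rw [ENNReal.ofReal_mul' (by positivity), ← hvol, ← setLIntegral_const, withDensity_apply _ hS]
    refine setLIntegral_mono' hS fun z hz => hg z (abs_le.2 ?_) (abs_le.2 ?_)
    · constructor <;> nlinarith [hz.1.1, hz.1.2, mul_pos hρ hη₀]
    · constructor <;> linarith [hz.2.1, hz.2.2]
  calc ENNReal.ofReal (m * ρ ^ 3 / 32 * η ^ 2)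
      = ENNReal.ofReal (ρ * η / 4) * ENNReal.ofReal (m * (ρ ^ 2 * η / 8)) := by
        rw [← ENNReal.ofReal_mul (by positivity)]
        congr 1
        ring
    _ ≤ ENNReal.ofReal (ρ * η / 4) * volume.withDensity g S := by gcongr
    _ = ∫⁻ _ in S, ENNReal.ofReal (ρ * η / 4) ∂volume.withDensity g := (setLIntegral_const _ _).symm
    _ ≤ ∫⁻ z in S, ENNReal.ofReal (signLoss z.1 (t * z.1 + σ * z.2)) ∂volume.withDensity g :=
        setLIntegral_mono' hS fun z hz => ENNReal.ofReal_le_ofReal (hloss z hz)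
    _ ≤ _ := setLIntegral_le_lintegral _ _

theorem norm_sub_sq_of_norm_eq_one {E : Type*} [NormedAddCommGroup E] [InnerProductSpace ℝ E]
    {u v : E} (hu : ‖u‖ = 1) (hv : ‖v‖ = 1) : ‖u - v‖ ^ 2 = 2 - 2 * ⟪u, v⟫ := by
  rw [norm_sub_sq_real, hu, hv]
  ring

theorem exists_orthonormal_completion {E : Type*} [NormedAddCommGroup E] [InnerProductSpace ℝ E]
    {u v : E} (hu : ‖u‖ = 1) (hv : ‖v‖ = 1) (huv : u ≠ v) (huv' : u ≠ -v) :
    ∃ (e : E) (σ : ℝ), ‖e‖ = 1 ∧ ⟪u, e⟫ = 0 ∧ 0 < σ ∧ σ ^ 2 = 1 - ⟪u, v⟫ ^ 2 ∧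
      v = ⟪u, v⟫ • u + σ • e := by
  have hlt : ⟪u, v⟫ < 1 := (inner_lt_one_iff_real_of_norm_eq_one hu hv).2 huv
  have hgt : ⟪u, -v⟫ < 1 := (inner_lt_one_iff_real_of_norm_eq_one hu (by rwa [norm_neg])).2 huv'
  rw [inner_neg_right] at hgt
  have hnorm : ‖v - ⟪u, v⟫ • u‖ ^ 2 = 1 - ⟪u, v⟫ ^ 2 := by
    rw [norm_sub_sq_real, real_inner_smul_right, real_inner_comm, norm_smul, hu, hv, mul_one,
      Real.norm_eq_abs, sq_abs]
    ring
  have hpos : 0 < ‖v - ⟪u, v⟫ • u‖ := by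
    refine (norm_nonneg _).lt_of_ne' fun h => ?_
    rw [h] at hnorm
    nlinarith
  refine ⟨‖v - ⟪u, v⟫ • u‖⁻¹ • (v - ⟪u, v⟫ • u), ‖v - ⟪u, v⟫ • u‖,
    norm_smul_inv_norm (norm_pos_iff.1 hpos), ?_, hpos, hnorm, ?_⟩
  · rw [real_inner_smul_right, inner_sub_right, real_inner_smul_right,
      real_inner_self_eq_norm_sq, hu]
    ring
  · rw [smul_inv_smul₀ hpos.ne', add_sub_cancel]

theorem lintegral_signLoss_inner_eq {E : Type*} [NormedAddCommGroup E] [InnerProductSpace ℝ E]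
    [MeasurableSpace E] [OpensMeasurableSpace E] {P : Measure E} {u e v : E} {t σ : ℝ}
    (hv : v = t • u + σ • e) (c : E) :
    ∫⁻ x, ENNReal.ofReal (signLoss ⟪u, x + c⟫ ⟪v, x + c⟫) ∂P =
      ∫⁻ z, ENNReal.ofReal (signLoss (z.1 + ⟪u, c⟫)
        (t * (z.1 + ⟪u, c⟫) + σ * (z.2 + ⟪e, c⟫))) ∂P.map fun x => (⟪u, x⟫, ⟪e, x⟫) := by
  rw [lintegral_map (measurable_signLoss (by fun_prop) (by fun_prop)).ennreal_ofReal
    (by fun_prop)]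
  refine lintegral_congr fun x => ?_
  simp only [hv, inner_add_left, real_inner_smul_left, inner_add_right]
  congr 2
  ring

namespace IsNormalizedLogConcave

theorem lintegral_signLoss_le_of_inner_le {E : Type*} [NormedAddCommGroup E]
    [InnerProductSpace ℝ E] [FiniteDimensional ℝ E] [MeasurableSpace E] [BorelSpace E]
    {P : Measure E} {C : ℝ} (hP : IsNormalizedLogConcave C P) (hC : 0 < C) {c : E} (hc : ‖c‖ ≤ C)
    {u v : E} (hu : ‖u‖ = 1) (hv : ‖v‖ = 1) (huv : ⟪u, v⟫ ≤ 1 / 2) :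
    ∫⁻ x, ENNReal.ofReal (signLoss ⟪u, x + c⟫ ⟪v, x + c⟫) ∂P ≤
      ENNReal.ofReal ((1 + 2 * C) * ‖u - v‖ ^ 2) := by
  have := hP.isProbabilityMeasure
  have hint := hP.integrable_inner_sq hC hu
  have hloss : ∀ x, signLoss ⟪u, x + c⟫ ⟪v, x + c⟫ ≤ 1 + C + ⟪u, x⟫ ^ 2 := fun x => by
    have hshift : |⟪u, c⟫| ≤ C := (abs_real_inner_le_norm u c).trans (by rwa [hu, one_mul])
    calc signLoss ⟪u, x + c⟫ ⟪v, x + c⟫ ≤ |⟪u, x⟫ + ⟪u, c⟫| := by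
          rw [← inner_add_right]
          exact signLoss_le_abs _ _
      _ ≤ |⟪u, x⟫| + C := (abs_add_le _ _).trans (by gcongr)
      _ ≤ 1 + C + ⟪u, x⟫ ^ 2 := by
          rw [← sq_abs ⟪u, x⟫]
          nlinarith [sq_nonneg (|⟪u, x⟫| - 1)]
  calc ∫⁻ x, ENNReal.ofReal (signLoss ⟪u, x + c⟫ ⟪v, x + c⟫) ∂P
      ≤ ∫⁻ x, ENNReal.ofReal (1 + C + ⟪u, x⟫ ^ 2) ∂P :=
        lintegral_mono fun x => ENNReal.ofReal_le_ofReal (hloss x)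
    _ = ENNReal.ofReal (1 + C + ∫ x, ⟪u, x⟫ ^ 2 ∂P) := by
        have hsum : Integrable (fun x => 1 + C + ⟪u, x⟫ ^ 2) P := (integrable_const _).add hint
        rw [← ofReal_integral_eq_lintegral_ofReal hsum (.of_forall fun x => by positivity),
          integral_add (integrable_const _) hint, integral_const, probReal_univ, one_smul]
    _ ≤ ENNReal.ofReal ((1 + 2 * C) * ‖u - v‖ ^ 2) := by
        refine ENNReal.ofReal_le_ofReal ?_
        rw [norm_sub_sq_of_norm_eq_one hu hv]
        nlinarith [hP.integral_inner_sq_le u hu]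

theorem exists_lintegral_signLoss_le {C : ℝ} (hC : 0 < C) :
    ∃ L : ℝ, 0 < L ∧ ∀ {E : Type*} [NormedAddCommGroup E] [InnerProductSpace ℝ E]
      [FiniteDimensional ℝ E] [MeasurableSpace E] [BorelSpace E] {P : Measure E},
      IsNormalizedLogConcave C P → ∀ {c : E}, ‖c‖ ≤ C → ∀ {u v : E}, ‖u‖ = 1 → ‖v‖ = 1 →
        ∫⁻ x, ENNReal.ofReal (signLoss ⟪u, x + c⟫ ⟪v, x + c⟫) ∂P ≤
          ENNReal.ofReal (L * ‖u - v‖ ^ 2) := by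
  obtain ⟨m, ρ, M, -, -, hM, hplanar⟩ := exists_planar_density_bounds hC
  refine ⟨1 + 2 * C + 16 * M * (1 + C ^ 2) * Real.pi, by positivity,
    fun {E} _ _ _ _ _ P hP c hc u v hu hv => ?_⟩
  rcases le_total ⟪u, v⟫ (1 / 2) with huv | huv
  · refine (hP.lintegral_signLoss_le_of_inner_le hC hc hu hv huv).trans
      (ENNReal.ofReal_le_ofReal (mul_le_mul_of_nonneg_right ?_ (sq_nonneg _)))
    exact le_add_of_nonneg_right (by positivity)
  rcases eq_or_ne u v with rfl | hne
  · simp [signLoss_self]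
  have hne' : u ≠ -v := by
    rintro rfl
    rw [inner_neg_left, real_inner_self_eq_norm_sq, hv] at huv
    norm_num at huv
  obtain ⟨e, σ, he, hue, -, hσ_sq, hv_eq⟩ := exists_orthonormal_completion hu hv hne hne'
  obtain ⟨g, hPg, -, hg⟩ := hplanar hP hu he hue
  have hec : |⟪e, c⟫| ≤ C := (abs_real_inner_le_norm e c).trans (by rwa [he, one_mul])
  calc ∫⁻ x, ENNReal.ofReal (signLoss ⟪u, x + c⟫ ⟪v, x + c⟫) ∂P
      = ∫⁻ z, ENNReal.ofReal (signLoss (z.1 + ⟪u, c⟫)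
          (⟪u, v⟫ * (z.1 + ⟪u, c⟫) + σ * (z.2 + ⟪e, c⟫))) ∂volume.withDensity g := by
        rw [lintegral_signLoss_inner_eq hv_eq, hPg]
    _ ≤ ENNReal.ofReal (16 * M * (1 + C ^ 2) * σ ^ 2 * Real.pi) :=
        lintegral_signLoss_withDensity_le hM.le hg huv σ _ hec
    _ ≤ ENNReal.ofReal ((1 + 2 * C + 16 * M * (1 + C ^ 2) * Real.pi) * ‖u - v‖ ^ 2) := by
        refine ENNReal.ofReal_le_ofReal ?_
        have hσ_le : σ ^ 2 ≤ ‖u - v‖ ^ 2 := by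
          rw [hσ_sq, norm_sub_sq_of_norm_eq_one hu hv]
          nlinarith [sq_nonneg (1 - ⟪u, v⟫)]
        rw [mul_right_comm _ (σ ^ 2)]
        exact mul_le_mul (le_add_of_nonneg_left (by positivity)) hσ_le (sq_nonneg σ) (by positivity)

theorem le_lintegral_signLoss_neg_left {E : Type*} [NormedAddCommGroup E]
    [InnerProductSpace ℝ E] [FiniteDimensional ℝ E] [MeasurableSpace E] [BorelSpace E]
    {P : Measure E} {C : ℝ} (hP : IsNormalizedLogConcave C P) (hC : 0 < C) {v : E}
    (hv : ‖v‖ = 1) : ENNReal.ofReal (absMomentBound C) ≤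
      ∫⁻ x, ENNReal.ofReal (signLoss ⟪-v, x⟫ ⟪v, x⟫) ∂P := by
  have := hP.isProbabilityMeasure
  have hloss : ∀ x, signLoss ⟪-v, x⟫ ⟪v, x⟫ = |⟪v, x⟫| := fun x => by
    have hsymm := signLoss_neg_right_self ⟪-v, x⟫
    rwa [← inner_neg_left, neg_neg, inner_neg_left v x, abs_neg, ← inner_neg_left] at hsymm
  have hint : Integrable (fun x => ⟪v, x⟫) P := integrable_of_integrable_sq
    (measurable_const.inner measurable_id).aestronglyMeasurable (hP.integrable_inner_sq hC hv)
  simp only [hloss]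
  rw [← ofReal_integral_eq_lintegral_ofReal hint.abs (.of_forall fun x => abs_nonneg _)]
  exact ENNReal.ofReal_le_ofReal (hP.absMomentBound_le_integral_abs_inner hC hv)

theorem exists_le_lintegral_signLoss {C : ℝ} (hC : 0 < C) :
    ∃ w : ℝ, 0 < w ∧ ∀ {E : Type*} [NormedAddCommGroup E] [InnerProductSpace ℝ E]
      [FiniteDimensional ℝ E] [MeasurableSpace E] [BorelSpace E] {P : Measure E},
      IsNormalizedLogConcave C P → ∀ {u v : E}, ‖u‖ = 1 → ‖v‖ = 1 →
        ENNReal.ofReal (w * ‖u - v‖ ^ 2) ≤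
          ∫⁻ x, ENNReal.ofReal (signLoss ⟪u, x⟫ ⟪v, x⟫) ∂P := by
  obtain ⟨m, ρ, M, hm, hρ, -, hplanar⟩ := exists_planar_density_bounds hC
  have hκ := absMomentBound_pos hC
  refine ⟨min (absMomentBound C / 4) (m * ρ ^ 3 / 128), by positivity,
    fun {E} _ _ _ _ _ P hP u v hu hv => ?_⟩
  have hdist := norm_sub_sq_of_norm_eq_one hu hv
  rcases eq_or_ne u v with rfl | hne
  · simp
  rcases eq_or_ne u (-v) with rfl | hne'
  · have hle := min_le_left (absMomentBound C / 4) (m * ρ ^ 3 / 128)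
    refine (ENNReal.ofReal_le_ofReal ?_).trans (hP.le_lintegral_signLoss_neg_left hC hv)
    rw [hdist, inner_neg_left, real_inner_self_eq_norm_sq, hv]
    linarith
  obtain ⟨e, σ, he, hue, hσ, hσ_sq, hv_eq⟩ := exists_orthonormal_completion hu hv hne hne'
  obtain ⟨g, hPg, hg, -⟩ := hplanar hP hu he hue
  obtain ⟨η, hη₀, hη₁, hηt, hη⟩ : ∃ η : ℝ, 0 < η ∧ η ≤ 1 ∧ ⟪u, v⟫ * η ≤ σ ∧
      ‖u - v‖ ^ 2 / 4 ≤ η ^ 2 := by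
    rcases le_total 0 ⟪u, v⟫ with ht | ht
    · exact ⟨σ, hσ, by nlinarith [sq_nonneg ⟪u, v⟫], by nlinarith, by nlinarith⟩
    · exact ⟨1, one_pos, le_rfl, by linarith, by nlinarith⟩
  calc ENNReal.ofReal (min (absMomentBound C / 4) (m * ρ ^ 3 / 128) * ‖u - v‖ ^ 2)
      ≤ ENNReal.ofReal (m * ρ ^ 3 / 32 * η ^ 2) := by
        refine ENNReal.ofReal_le_ofReal ?_
        calc min (absMomentBound C / 4) (m * ρ ^ 3 / 128) * ‖u - v‖ ^ 2
            ≤ m * ρ ^ 3 / 128 * ‖u - v‖ ^ 2 := by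
              gcongr
              exact min_le_right _ _
          _ = m * ρ ^ 3 / 32 * (‖u - v‖ ^ 2 / 4) := by ring
          _ ≤ m * ρ ^ 3 / 32 * η ^ 2 := by gcongr
    _ ≤ ∫⁻ z, ENNReal.ofReal (signLoss z.1 (⟪u, v⟫ * z.1 + σ * z.2)) ∂volume.withDensity g :=
        le_lintegral_signLoss_withDensity hρ hg hη₀ hη₁ hσ.le hηt
    _ = ∫⁻ x, ENNReal.ofReal (signLoss ⟪u, x⟫ ⟪v, x⟫) ∂P := by
        simpa only [add_zero, inner_zero_right, hPg] using
          (lintegral_signLoss_inner_eq (P := P) hv_eq 0).symm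

end IsNormalizedLogConcave

end SignLoss

section EuclideanCoordinates

open WithLp
open scoped ENNReal RealInnerProductSpace

variable {d : ℕ}

theorem eNorm_eq_norm_toLp (x : Fin d → ℝ) : eNorm x = ‖toLp 2 x‖ := by
  simp only [eNorm, EuclideanSpace.norm_eq, Real.norm_eq_abs, sq_abs]

theorem dotProduct_eq_inner_toLp (a x : Fin d → ℝ) : a ⬝ᵥ x = ⟪toLp 2 a, toLp 2 x⟫ := by
  simp only [EuclideanSpace.inner_toLp_toLp, star_trivial, dotProduct_comm]

theorem measurable_dotProduct (a : Fin d → ℝ) : Measurable fun x => a ⬝ᵥ x := by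
  unfold dotProduct
  fun_prop

theorem IsLogConcaveFn.logConcave_ofReal {p : (Fin d → ℝ) → ℝ} (hp : IsLogConcaveFn p)
    (hp₀ : ∀ x, 0 ≤ p x) : LogConcave fun x => ENNReal.ofReal (p x) := by
  intro x y s t hs ht hst
  obtain rfl : t = 1 - s := by linarith
  simpa only [ENNReal.ofReal_rpow_of_nonneg (hp₀ x) hs.le,
    ENNReal.ofReal_rpow_of_nonneg (hp₀ y) ht.le,
    ← ENNReal.ofReal_mul (Real.rpow_nonneg (hp₀ x) s)] using
    ENNReal.ofReal_le_ofReal (hp x y s hs.le (by linarith))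

theorem IsLogConcaveFn.hasLogConcaveDensity {p : (Fin d → ℝ) → ℝ} (hp : IsLogConcaveFn p)
    (hp₀ : ∀ x, 0 ≤ p x) :
    HasLogConcaveDensity (volume.withDensity fun x => ENNReal.ofReal (p x)) := by
  obtain ⟨q, hqm, hq, hpq⟩ := (hp.logConcave_ofReal hp₀).exists_measurable_ae_eq volume
    fun _ => ENNReal.ofReal_ne_top
  exact ⟨q, hqm, hq, withDensity_congr_ae hpq⟩

theorem HasLogConcaveDensity.map_toLp_sub {P : Measure (Fin d → ℝ)} (hP : HasLogConcaveDensity P)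
    (c : Fin d → ℝ) : HasLogConcaveDensity (P.map fun x => toLp 2 (x - c)) := by
  refine hP.map_affineEquiv ((AffineEquiv.vaddConst ℝ c).symm.trans
    (WithLp.linearEquiv 2 ℝ (Fin d → ℝ)).symm.toAffineEquiv)
    ((PiLp.volume_preserving_toLp (Fin d)).comp (measurePreserving_sub_right volume c)) ?_
  exact (PiLp.volume_preserving_ofLp (Fin d)).measurable.add_const c

theorem integrable_of_integral_sub_sq_ne_zero {Ω : Type*} [MeasurableSpace Ω] {μ : Measure Ω}
    [IsFiniteMeasure μ] {Y : Ω → ℝ} (hY : AEStronglyMeasurable Y μ) {m : ℝ}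
    (hvar : ∫ ω, (Y ω - m) ^ 2 ∂μ ≠ 0) : Integrable Y μ := by
  have hsub : Integrable (fun ω => Y ω - m) μ :=
    integrable_of_integrable_sq (hY.sub aestronglyMeasurable_const) (.of_integral_ne_zero hvar)
  simpa only [Pi.add_def, sub_add_cancel] using hsub.add (integrable_const m)

variable {Ω : Type*} [MeasurableSpace Ω] {μ : Measure Ω} {X : Ω → Fin d → ℝ}

theorem integral_dotProduct (hX : ∀ i, Integrable (fun ω => X ω i) μ) (a : Fin d → ℝ) :
    ∫ ω, a ⬝ᵥ X ω ∂μ = a ⬝ᵥ fun i => ∫ ω, X ω i ∂μ := by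
  simp only [dotProduct]
  rw [integral_finsetSum _ fun i _ => (hX i).const_mul (a i)]
  simp only [integral_const_mul]

theorem integrable_apply_of_integral_sub_sq_ne_zero [IsFiniteMeasure μ] (hX : Measurable X)
    {m : Fin d → ℝ} (hvar : ∀ a, eNorm a = 1 → ∫ ω, (a ⬝ᵥ X ω - a ⬝ᵥ m) ^ 2 ∂μ ≠ 0) (i : Fin d) :
    Integrable (fun ω => X ω i) μ := by
  have hi := hvar (Pi.single i 1) (by simp [eNorm_eq_norm_toLp])
  simp only [single_one_dotProduct] at hi
  exact integrable_of_integral_sub_sq_ne_zero (by fun_prop) hi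

theorem isNormalizedLogConcave_map_toLp_sub [IsProbabilityMeasure μ] (hX : Measurable X) {C : ℝ}
    (hdens : HasLogConcaveDensity (μ.map X)) (hint : ∀ i, Integrable (fun ω => X ω i) μ)
    {m : Fin d → ℝ} (hm : m = fun i => ∫ ω, X ω i ∂μ)
    (hcov : ∀ a, eNorm a = 1 → C⁻¹ ≤ ∫ ω, (a ⬝ᵥ X ω - a ⬝ᵥ m) ^ 2 ∂μ ∧
      ∫ ω, (a ⬝ᵥ X ω - a ⬝ᵥ m) ^ 2 ∂μ ≤ C) :
    IsNormalizedLogConcave C (μ.map fun ω => toLp 2 (X ω - m)) := by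
  have hcenter : Measurable fun ω => toLp 2 (X ω - m) := by fun_prop
  have hinner (a : EuclideanSpace ℝ (Fin d)) (ω : Ω) :
      ⟪a, toLp 2 (X ω - m)⟫ = ofLp a ⬝ᵥ X ω - ofLp a ⬝ᵥ m := by
    rw [← dotProduct_sub, dotProduct_eq_inner_toLp]
  have hsq (a : EuclideanSpace ℝ (Fin d)) : ∫ x, ⟪a, x⟫ ^ 2 ∂μ.map (fun ω => toLp 2 (X ω - m)) =
      ∫ ω, (ofLp a ⬝ᵥ X ω - ofLp a ⬝ᵥ m) ^ 2 ∂μ := by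
    rw [integral_map hcenter.aemeasurable (by fun_prop)]
    simp only [hinner]
  have hunit {a : EuclideanSpace ℝ (Fin d)} (ha : ‖a‖ = 1) : eNorm (ofLp a) = 1 := by
    rw [eNorm_eq_norm_toLp, toLp_ofLp, ha]
  refine ⟨Measure.isProbabilityMeasure_map hcenter.aemeasurable, ?_, fun a => ?_,
    fun a ha => hsq a ▸ (hcov _ (hunit ha)).1, fun a ha => hsq a ▸ (hcov _ (hunit ha)).2⟩
  · have h := hdens.map_toLp_sub m
    rwa [Measure.map_map (by fun_prop) hX] at h
  · have hdot : Integrable (fun ω => ofLp a ⬝ᵥ X ω) μ :=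
      integrable_finsetSum _ fun i _ => (hint i).const_mul (a i)
    rw [integral_map hcenter.aemeasurable (by fun_prop)]
    simp only [hinner]
    rw [integral_sub hdot (integrable_const _), integral_dotProduct hint, hm]
    simp

theorem ofReal_integral_signLoss_dotProduct (hX : Measurable X)
    (hint : ∀ i, Integrable (fun ω => X ω i) μ) (m u v : Fin d → ℝ) :
    ENNReal.ofReal (∫ ω, signLoss (u ⬝ᵥ X ω) (v ⬝ᵥ X ω) ∂μ) =
      ∫⁻ x, ENNReal.ofReal (signLoss ⟪toLp 2 u, x + toLp 2 m⟫ ⟪toLp 2 v, x + toLp 2 m⟫)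
        ∂μ.map fun ω => toLp 2 (X ω - m) := by
  have hdot : Integrable (fun ω => u ⬝ᵥ X ω) μ :=
    integrable_finsetSum _ fun i _ => (hint i).const_mul (u i)
  have hloss : Integrable (fun ω => signLoss (u ⬝ᵥ X ω) (v ⬝ᵥ X ω)) μ :=
    hdot.abs.mono' (measurable_signLoss ((measurable_dotProduct u).comp hX)
      ((measurable_dotProduct v).comp hX)).aestronglyMeasurable
      (.of_forall fun ω => by
        rw [Real.norm_of_nonneg (signLoss_nonneg _ _)]; exact signLoss_le_abs _ _)
  rw [ofReal_integral_eq_lintegral_ofReal hloss (.of_forall fun ω => signLoss_nonneg _ _),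
    lintegral_map (measurable_signLoss (by fun_prop) (by fun_prop)).ennreal_ofReal (by fun_prop)]
  simp only [← toLp_add, sub_add_cancel, dotProduct_eq_inner_toLp]

end EuclideanCoordinates

/-- If `X` has a log-concave density, `E[X] = 0`, and the eigenvalues of
`Cov(X)` lie in `[C⁻¹, C]`, then there is `L > 0` depending only on `C` with
`L⁻¹ ‖u−v‖² ≤ E[|u'X| 1(sgn(u'X) ≠ sgn(v'X))] ≤ L ‖u−v‖²` for all unit vectors `u, v`; the
upper bound holds more generally if `E[X] = 0` is replaced by `‖E[X]‖ ≤ C`. -/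
theorem stmt_7 (C : ℝ) (hC : 0 < C) :
    ∃ L : ℝ, 0 < L ∧
      ∀ (d : ℕ), 1 ≤ d →
      ∀ (Ω : Type) (_ : MeasurableSpace Ω) (μ : Measure Ω), IsProbabilityMeasure μ →
      ∀ (X : Ω → Fin d → ℝ), Measurable X →
      ∀ p : (Fin d → ℝ) → ℝ, (∀ x, 0 ≤ p x) → IsLogConcaveFn p →
        μ.map X = MeasureTheory.volume.withDensity (fun x => ENNReal.ofReal (p x)) →
        (∀ a : Fin d → ℝ, eNorm a = 1 →
          C⁻¹ ≤ ∫ ω, (a ⬝ᵥ X ω - a ⬝ᵥ (fun i => ∫ ω', X ω' i ∂μ)) ^ 2 ∂μ ∧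
            ∫ ω, (a ⬝ᵥ X ω - a ⬝ᵥ (fun i => ∫ ω', X ω' i ∂μ)) ^ 2 ∂μ ≤ C) →
        -- centered case: two-sided bound
        (((∀ i, ∫ ω, X ω i ∂μ = 0) →
            ∀ u v : Fin d → ℝ, eNorm u = 1 → eNorm v = 1 →
              L⁻¹ * eNorm (u - v) ^ 2
                  ≤ ∫ ω, |u ⬝ᵥ X ω| *
                      (if Real.sign (u ⬝ᵥ X ω) = Real.sign (v ⬝ᵥ X ω) then 0 else 1) ∂μ ∧
                ∫ ω, |u ⬝ᵥ X ω| *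
                      (if Real.sign (u ⬝ᵥ X ω) = Real.sign (v ⬝ᵥ X ω) then 0 else 1) ∂μ
                  ≤ L * eNorm (u - v) ^ 2) ∧
          -- non-centered case: upper bound only
          (eNorm (fun i => ∫ ω, X ω i ∂μ) ≤ C →
            ∀ u v : Fin d → ℝ, eNorm u = 1 → eNorm v = 1 →
              ∫ ω, |u ⬝ᵥ X ω| *
                    (if Real.sign (u ⬝ᵥ X ω) = Real.sign (v ⬝ᵥ X ω) then 0 else 1) ∂μ
                ≤ L * eNorm (u - v) ^ 2)) := by
  obtain ⟨L₁, hL₁, hupper⟩ := IsNormalizedLogConcave.exists_lintegral_signLoss_le hC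
  obtain ⟨w, hw, hlower⟩ := IsNormalizedLogConcave.exists_le_lintegral_signLoss hC
  refine ⟨L₁ + w⁻¹, by positivity, fun d _ Ω _ μ _ X hX p hp₀ hp hmap hcov => ?_⟩
  have hint := integrable_apply_of_integral_sub_sq_ne_zero hX fun a ha =>
    ((inv_pos.2 hC).trans_le (hcov a ha).1).ne'
  have hlaw := isNormalizedLogConcave_map_toLp_sub hX (hmap ▸ hp.hasLogConcaveDensity hp₀) hint
    rfl hcov
  have htransfer := ofReal_integral_signLoss_dotProduct hX hint fun i => ∫ ω, X ω i ∂μ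
  have hle (hmean : eNorm (fun i => ∫ ω, X ω i ∂μ) ≤ C) (u v : Fin d → ℝ) (hu : eNorm u = 1)
      (hv : eNorm v = 1) :
      ∫ ω, signLoss (u ⬝ᵥ X ω) (v ⬝ᵥ X ω) ∂μ ≤ (L₁ + w⁻¹) * eNorm (u - v) ^ 2 := by
    rw [eNorm_eq_norm_toLp] at hmean hu hv ⊢
    have h := hupper hlaw hmean hu hv
    rw [← htransfer, ENNReal.ofReal_le_ofReal_iff (by positivity), ← WithLp.toLp_sub] at h
    exact h.trans (by gcongr; exact le_add_of_nonneg_right (by positivity))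
  refine ⟨fun hcentered u v hu hv => ⟨?_, hle (by simp [hcentered, eNorm, hC.le]) u v hu hv⟩, hle⟩
  rw [eNorm_eq_norm_toLp] at hu hv ⊢
  have htransfer₀ := htransfer u v
  have h := hlower hlaw hu hv
  simp only [hcentered, ← Pi.zero_def, WithLp.toLp_zero, add_zero] at htransfer₀ h
  rw [← htransfer₀, ENNReal.ofReal_le_ofReal_iff (integral_nonneg fun ω => signLoss_nonneg _ _),
    ← WithLp.toLp_sub] at h
  exact h.trans' (by gcongr; exact inv_le_of_inv_le₀ hw (le_add_of_nonneg_left hL₁.le))
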